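/- arXiv:2206.01391 — 2 statements merged into one kernel-verified Lean document; each statement's English description precedes it below -/
import Mathlib

section
/- Let x ≥ 3.5 be a half-integer (x = m + 1/2 for some positive integer m) and let C = 1284699552/444215525. Then ∑_{p prime, x < p < 3x/2} 1/(p − x) ≤ C + 2·log(log x). -/
/-!
Write `x = m + 1/2` and let `A(i)` be the number of primes in `(m, m + i]`. Partial summation
turns the sum of `1 / (p - x)` into `∑ A(i) / (i ^ 2 - 1/4)` plus a boundary term
`A(n) / (n - 1/2)`, where `n` is about `m / 2`. For `i ≤ 8192` we use `A(i) ≤ i / 3 + 1`, since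
primes beyond `3` are prime to `6`. For larger `i`, Selberg's sieve of level
`(2 √i / log i) ^ 2`, together with the constant `1 / 2` in `H_z ≥ log (z + 1) + 1 / 2`, gives
`A(i) ≤ i (2 / log i + 3.3 / (log i) ^ (3/2))`, a form of the Brun–Titchmarsh inequality. In the
variable `u = log i` the bracket has the primitive `2 log u - 6.6 / √u`: the first term produces
`2 log log x`, and the second one absorbs the boundary term.
-/

section SelbergSieve

open Finset ArithmeticFunction BoundingSieve
open scoped ArithmeticFunction.Moebius

theorem sum_moebius_divisors_filter_dvd {h : ℕ} (hh : Squarefree h) (l : ℕ) :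
    ∑ d ∈ h.divisors with l ∣ d, μ d = if h = l then μ l else 0 := by
  by_cases hlh : l ∣ h
  · obtain ⟨k, rfl⟩ := hlh
    have hlk : l.Coprime k := (Nat.squarefree_mul_iff.mp hh).1
    have hl : 0 < l := Nat.pos_of_ne_zero (left_ne_zero_of_mul hh.ne_zero)
    have multiples : {d ∈ (l * k).divisors | l ∣ d} = k.divisors.image (l * ·) := by
      ext d
      simp only [mem_filter, Nat.mem_divisors, mem_image]
      constructor
      · rintro ⟨⟨hd, h0⟩, j, rfl⟩
        exact ⟨j, ⟨Nat.dvd_of_mul_dvd_mul_left hl hd, right_ne_zero_of_mul h0⟩, rfl⟩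
      · rintro ⟨j, ⟨hj, _⟩, rfl⟩
        exact ⟨⟨mul_dvd_mul_left l hj, hh.ne_zero⟩, dvd_mul_right l j⟩
    calc ∑ d ∈ (l * k).divisors with l ∣ d, μ d
        = ∑ j ∈ k.divisors, μ (l * j) := by
          rw [multiples, sum_image fun a _ b _ hab => Nat.eq_of_mul_eq_mul_left hl hab]
      _ = ∑ j ∈ k.divisors, μ l * μ j := sum_congr rfl fun j hj =>
          isMultiplicative_moebius.map_mul_of_coprime
            (hlk.coprime_dvd_right (Nat.dvd_of_mem_divisors hj))
      _ = μ l * if k = 1 then 1 else 0 := by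
          rw [← mul_sum, ← coe_mul_zeta_apply, moebius_mul_coe_zeta, one_apply]
      _ = if l * k = l then μ l else 0 := by
          simp [Nat.mul_eq_left hl.ne']
  · have hne : h ≠ l := fun e => hlh (e ▸ dvd_rfl)
    rw [if_neg hne, filter_false_of_mem, sum_empty]
    exact fun d hd hld => hlh (hld.trans (Nat.dvd_of_mem_divisors hd))

theorem abs_lambdaSquared_le_sum_lcm {P d : ℕ} (hP : P ≠ 0) (hd : d ∣ P) (w : ℕ → ℝ) :
    |lambdaSquared w d| ≤ ∑ d₁ ∈ P.divisors, ∑ d₂ ∈ P.divisors,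
      if d = d₁.lcm d₂ then |w d₁| * |w d₂| else 0 := by
  have abs_term (d₁ d₂ : ℕ) : |if d = d₁.lcm d₂ then w d₁ * w d₂ else 0| =
      if d = d₁.lcm d₂ then |w d₁| * |w d₂| else 0 := by
    split_ifs <;> simp [abs_mul]
  have hsub : d.divisors ⊆ P.divisors := Nat.divisors_subset_of_dvd hP hd
  calc |lambdaSquared w d|
      ≤ ∑ d₁ ∈ d.divisors, ∑ d₂ ∈ d.divisors,
          if d = d₁.lcm d₂ then |w d₁| * |w d₂| else 0 := by
        refine (abs_sum_le_sum_abs _ _).trans (sum_le_sum fun d₁ _ => ?_)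
        exact (abs_sum_le_sum_abs _ _).trans (sum_le_sum fun d₂ _ => (abs_term d₁ d₂).le)
    _ ≤ ∑ d₁ ∈ d.divisors, ∑ d₂ ∈ P.divisors,
          if d = d₁.lcm d₂ then |w d₁| * |w d₂| else 0 :=
        sum_le_sum fun _ _ => sum_le_sum_of_subset_of_nonneg hsub fun _ _ _ => by positivity
    _ ≤ _ := sum_le_sum_of_subset_of_nonneg hsub fun _ _ _ => by positivity

theorem errSum_lambdaSquared_le (s : BoundingSieve) (w : ℕ → ℝ) :
    s.errSum (lambdaSquared w) ≤ ∑ d₁ ∈ s.prodPrimes.divisors, ∑ d₂ ∈ s.prodPrimes.divisors,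
      |w d₁| * |w d₂| * |s.rem (d₁.lcm d₂)| := by
  calc s.errSum (lambdaSquared w)
      ≤ ∑ d ∈ s.prodPrimes.divisors, (∑ d₁ ∈ s.prodPrimes.divisors,
          ∑ d₂ ∈ s.prodPrimes.divisors,
            if d = d₁.lcm d₂ then |w d₁| * |w d₂| else 0) * |s.rem d| := by
        unfold errSum
        gcongr with d hd
        exact abs_lambdaSquared_le_sum_lcm prodPrimes_ne_zero (Nat.dvd_of_mem_divisors hd) w
    _ = ∑ d₁ ∈ s.prodPrimes.divisors, ∑ d₂ ∈ s.prodPrimes.divisors,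
          ∑ d ∈ s.prodPrimes.divisors,
            if d = d₁.lcm d₂ then |w d₁| * |w d₂| * |s.rem d| else 0 := by
        simp_rw [sum_mul, ite_mul, zero_mul]
        rw [sum_comm]
        exact sum_congr rfl fun _ _ => sum_comm
    _ = _ := by
        refine sum_congr rfl fun d₁ h₁ => sum_congr rfl fun d₂ h₂ => ?_
        have hlcm : d₁.lcm d₂ ∈ s.prodPrimes.divisors := Nat.mem_divisors.mpr
          ⟨Nat.lcm_dvd (Nat.dvd_of_mem_divisors h₁) (Nat.dvd_of_mem_divisors h₂),
            prodPrimes_ne_zero⟩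
        rw [sum_ite_eq', if_pos hlcm]

variable (s : SelbergSieve)

/-- The moduli `d ∣ P` with `d ≤ √y`, on which Selberg's weights are supported; here `P` is the
product of the sifting primes and `y` is the level of the sieve. -/
noncomputable def selbergSupport : Finset ℕ :=
  {d ∈ s.prodPrimes.divisors | (d : ℝ) ^ 2 ≤ s.level}

/-- Selberg's sum `S = ∑ g(l)` over `l ∣ P` with `l ≤ √y`; the main term of the sieve
is `X / S`. -/
noncomputable def selbergSum : ℝ := ∑ l ∈ selbergSupport s, s.selbergTerms l

/-- Selberg's optimal weights `λ_d = μ(d) / (ν(d) S) * ∑ g(l)`, where the sum is over the multiples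
`l` of `d` in the support. -/
noncomputable def selbergWeight (d : ℕ) : ℝ :=
  μ d / s.nu d * (∑ l ∈ selbergSupport s with d ∣ l, s.selbergTerms l) / selbergSum s

variable {s}

theorem mem_selbergSupport {d : ℕ} :
    d ∈ selbergSupport s ↔ d ∣ s.prodPrimes ∧ (d : ℝ) ^ 2 ≤ s.level := by
  simp [selbergSupport, prodPrimes_ne_zero]

theorem selbergTerms_pos_of_mem_selbergSupport {l : ℕ} (hl : l ∈ selbergSupport s) :
    0 < s.selbergTerms l :=
  selbergTerms_pos (mem_selbergSupport.mp hl).1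

variable (s) in
theorem one_mem_selbergSupport : 1 ∈ selbergSupport s :=
  mem_selbergSupport.mpr ⟨one_dvd _, by simpa using s.one_le_level⟩

variable (s) in
theorem selbergSum_pos : 0 < selbergSum s :=
  sum_pos (fun _ => selbergTerms_pos_of_mem_selbergSupport) ⟨1, one_mem_selbergSupport s⟩

variable (s) in
theorem selbergWeight_one : selbergWeight s 1 = 1 := by
  rw [selbergWeight, filter_true_of_mem fun l _ => one_dvd l, ← selbergSum]
  simp [s.nu_mult.map_one, (selbergSum_pos s).ne']

theorem selbergWeight_eq_zero_of_notMem {d : ℕ} (hd : d ∉ selbergSupport s) :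
    selbergWeight s d = 0 := by
  have no_multiples : {l ∈ selbergSupport s | d ∣ l} = ∅ := by
    refine filter_false_of_mem fun l hl hdl => hd ?_
    obtain ⟨hlP, hly⟩ := mem_selbergSupport.mp hl
    have hdl' : d ≤ l := Nat.le_of_dvd (Nat.pos_of_dvd_of_pos hlP
      (Nat.pos_of_ne_zero prodPrimes_ne_zero)) hdl
    exact mem_selbergSupport.mpr ⟨hdl.trans hlP, le_trans (by gcongr) hly⟩
  simp [selbergWeight, no_multiples]

/- Möbius inversion diagonalizes the weights: this is the choice that minimises the quadratic
form `mainSum_lambdaSquared_eq_sum_mul_sum_sq`. -/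
theorem sum_nu_mul_selbergWeight (l : ℕ) :
    ∑ d ∈ s.prodPrimes.divisors with l ∣ d, s.nu d * selbergWeight s d =
      if l ∈ selbergSupport s then μ l * s.selbergTerms l / selbergSum s else 0 := by
  have expand : ∀ d ∈ s.prodPrimes.divisors, s.nu d * selbergWeight s d =
      ∑ h ∈ selbergSupport s, if d ∣ h then μ d * (s.selbergTerms h / selbergSum s) else 0 := by
    intro d hd
    have hν : s.nu d ≠ 0 := nu_ne_zero (Nat.dvd_of_mem_divisors hd)
    rw [← sum_filter, ← mul_sum, ← sum_div, selbergWeight]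
    field_simp
  have orthogonality : ∀ h ∈ selbergSupport s,
      (∑ d ∈ s.prodPrimes.divisors with l ∣ d,
        if d ∣ h then μ d * (s.selbergTerms h / selbergSum s) else 0) =
      if h = l then μ l * s.selbergTerms l / selbergSum s else 0 := by
    intro h hh
    obtain ⟨hP, -⟩ := mem_selbergSupport.mp hh
    have hsum : (∑ d ∈ h.divisors with l ∣ d, (μ d : ℝ)) = if h = l then (μ l : ℝ) else 0 := by
      exact_mod_cast congrArg (Int.cast (R := ℝ))
        (sum_moebius_divisors_filter_dvd (squarefree_of_dvd_prodPrimes hP) l)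
    rw [← sum_filter, filter_filter, ← sum_mul]
    simp_rw [and_comm (a := l ∣ _)]
    rw [← filter_filter, Nat.divisors_filter_dvd_of_dvd prodPrimes_ne_zero hP, hsum]
    split_ifs with hl
    · rw [hl, mul_div_assoc]
    · rw [zero_mul]
  rw [sum_congr rfl fun d hd => expand d (mem_filter.mp hd).1, sum_comm,
    sum_congr rfl orthogonality, sum_ite_eq']

variable (s) in
theorem mainSum_lambdaSquared_selbergWeight :
    s.mainSum (lambdaSquared (selbergWeight s)) = (selbergSum s)⁻¹ := by
  have hS := (selbergSum_pos s).ne'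
  calc s.mainSum (lambdaSquared (selbergWeight s))
      = ∑ l ∈ s.prodPrimes.divisors, if l ∈ selbergSupport s then
          (s.selbergTerms l)⁻¹ * (μ l * s.selbergTerms l / selbergSum s) ^ 2 else 0 := by
        rw [mainSum_lambdaSquared_eq_sum_mul_sum_sq]
        refine sum_congr rfl fun l _ => ?_
        rw [← sum_filter, sum_nu_mul_selbergWeight]
        split_ifs <;> simp
    _ = ∑ l ∈ selbergSupport s,
          (s.selbergTerms l)⁻¹ * (μ l * s.selbergTerms l / selbergSum s) ^ 2 := by
        rw [← sum_filter, filter_mem_eq_inter,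
          inter_eq_right.mpr (show selbergSupport s ⊆ s.prodPrimes.divisors from filter_subset _ _)]
    _ = ∑ l ∈ selbergSupport s, s.selbergTerms l / selbergSum s ^ 2 := by
        refine sum_congr rfl fun l hl => ?_
        have hg := (selbergTerms_pos_of_mem_selbergSupport hl).ne'
        have hμ : (μ l : ℝ) ^ 2 = 1 := mod_cast moebius_sq_eq_one_of_squarefree
          (squarefree_of_dvd_prodPrimes (mem_selbergSupport.mp hl).1)
        rw [div_pow, mul_pow, hμ]
        field_simp
    _ = (selbergSum s)⁻¹ := by
        rw [← sum_div, ← selbergSum]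
        field_simp

variable (s) in
/-- The cofactors `h ∣ P` prime to `d` for which `d * h` lies in the support. -/
noncomputable def selbergCofactors (d : ℕ) : Finset ℕ :=
  {h ∈ s.prodPrimes.divisors | d.Coprime h ∧ d * h ∈ selbergSupport s}

theorem mem_selbergCofactors {d h : ℕ} :
    h ∈ selbergCofactors s d ↔ d.Coprime h ∧ d * h ∈ selbergSupport s := by
  simp only [selbergCofactors, mem_filter, Nat.mem_divisors, and_iff_right_iff_imp]
  exact fun hh => ⟨(dvd_mul_left h d).trans (mem_selbergSupport.mp hh.2).1, prodPrimes_ne_zero⟩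

theorem sum_selbergTerms_multiples {d : ℕ} (hd : 0 < d) :
    ∑ l ∈ selbergSupport s with d ∣ l, s.selbergTerms l =
      s.selbergTerms d * ∑ h ∈ selbergCofactors s d, s.selbergTerms h := by
  have multiples : {l ∈ selbergSupport s | d ∣ l} = (selbergCofactors s d).image (d * ·) := by
    ext l
    simp only [mem_filter, mem_image, mem_selbergCofactors]
    constructor
    · rintro ⟨hl, h, rfl⟩
      have hsq := squarefree_of_dvd_prodPrimes (mem_selbergSupport.mp hl).1
      exact ⟨h, ⟨(Nat.squarefree_mul_iff.mp hsq).1, hl⟩, rfl⟩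
    · rintro ⟨h, ⟨-, hl⟩, rfl⟩
      exact ⟨hl, dvd_mul_right d h⟩
  rw [multiples, sum_image fun a _ b _ hab => Nat.eq_of_mul_eq_mul_left hd hab, mul_sum]
  exact sum_congr rfl fun h hh =>
    selbergTerms_isMultiplicative.map_mul_of_coprime (mem_selbergCofactors.mp hh).1

theorem injOn_mul_divisors_product_selbergCofactors (d : ℕ) :
    Set.InjOn (fun x : ℕ × ℕ => x.1 * x.2)
      (d.divisors ×ˢ selbergCofactors s d : Finset (ℕ × ℕ)) := by
  have gcd_recovers {k h : ℕ} (hk : k ∣ d) (hc : d.Coprime h) : (k * h).gcd d = k := by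
    rw [Nat.Coprime.gcd_mul_right_cancel k hc.symm, Nat.gcd_eq_left hk]
  rintro ⟨k, h⟩ hx ⟨k', h'⟩ hx' heq
  simp only [mem_coe, mem_product, Nat.mem_divisors, mem_selbergCofactors] at hx hx' heq
  obtain rfl : k = k' := by
    rw [← gcd_recovers hx.1.1 hx.2.1, heq, gcd_recovers hx'.1.1 hx'.2.1]
  have hk : 0 < k := Nat.pos_of_dvd_of_pos hx.1.1 (Nat.pos_of_ne_zero hx.1.2)
  rw [Nat.eq_of_mul_eq_mul_left hk heq]

theorem mul_mem_selbergSupport {d k h : ℕ} (hk : k ∈ d.divisors)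
    (hh : h ∈ selbergCofactors s d) : k * h ∈ selbergSupport s := by
  obtain ⟨hdP, hdy⟩ := mem_selbergSupport.mp (mem_selbergCofactors.mp hh).2
  refine mem_selbergSupport.mpr
    ⟨(mul_dvd_mul_right (Nat.dvd_of_mem_divisors hk) h).trans hdP, le_trans ?_ hdy⟩
  have hkd : k ≤ d := Nat.divisor_le hk
  gcongr

/- The products `k * h` with `k ∣ d` and `h` a cofactor of `d` are distinct elements of the support,
and `∑ k ∣ d, g(k) = g(d) / ν(d)`. -/
theorem sum_selbergTerms_multiples_le {d : ℕ} (hd : d ∣ s.prodPrimes) :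
    ∑ l ∈ selbergSupport s with d ∣ l, s.selbergTerms l ≤ s.nu d * selbergSum s := by
  have hν : 0 < s.nu d := nu_pos_of_dvd_prodPrimes hd
  have hd0 : 0 < d := Nat.pos_of_dvd_of_pos hd (Nat.pos_of_ne_zero prodPrimes_ne_zero)
  have sum_divisors : ∑ k ∈ d.divisors, s.selbergTerms k = s.selbergTerms d * (s.nu d)⁻¹ := by
    rw [← sum_divisors_selbergTerms_eq_selbergTerms_mul_nu_inv hd, ← sum_filter,
      Nat.divisors_filter_dvd_of_dvd prodPrimes_ne_zero hd]
  have products_le : (∑ k ∈ d.divisors, s.selbergTerms k) *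
      ∑ h ∈ selbergCofactors s d, s.selbergTerms h ≤ selbergSum s := by
    calc (∑ k ∈ d.divisors, s.selbergTerms k) * ∑ h ∈ selbergCofactors s d, s.selbergTerms h
        = ∑ x ∈ d.divisors ×ˢ selbergCofactors s d, s.selbergTerms (x.1 * x.2) := by
          rw [sum_mul_sum, ← sum_product']
          refine sum_congr rfl fun x hx => ?_
          obtain ⟨hk, hh⟩ := mem_product.mp hx
          exact (selbergTerms_isMultiplicative.map_mul_of_coprime
            ((mem_selbergCofactors.mp hh).1.coprime_dvd_left (Nat.dvd_of_mem_divisors hk))).symm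
      _ = ∑ l ∈ (d.divisors ×ˢ selbergCofactors s d).image fun x => x.1 * x.2,
            s.selbergTerms l :=
          (sum_image (injOn_mul_divisors_product_selbergCofactors d)).symm
      _ ≤ selbergSum s := by
          refine sum_le_sum_of_subset_of_nonneg (image_subset_iff.mpr fun x hx => ?_)
            fun l hl _ => (selbergTerms_pos_of_mem_selbergSupport hl).le
          obtain ⟨hk, hh⟩ := mem_product.mp hx
          exact mul_mem_selbergSupport hk hh
  rw [sum_divisors] at products_le
  calc ∑ l ∈ selbergSupport s with d ∣ l, s.selbergTerms l
      = s.nu d * (s.selbergTerms d * (s.nu d)⁻¹ *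
          ∑ h ∈ selbergCofactors s d, s.selbergTerms h) := by
        rw [sum_selbergTerms_multiples hd0]
        field_simp
    _ ≤ s.nu d * selbergSum s := by gcongr

theorem abs_selbergWeight_le_one (d : ℕ) : |selbergWeight s d| ≤ 1 := by
  by_cases hd : d ∈ selbergSupport s
  · have hdP := (mem_selbergSupport.mp hd).1
    have hν : 0 < s.nu d := nu_pos_of_dvd_prodPrimes hdP
    have hμ : |(μ d : ℝ)| = 1 := mod_cast abs_moebius_eq_one_of_squarefree
      (squarefree_of_dvd_prodPrimes hdP)
    have hsum : 0 ≤ ∑ l ∈ selbergSupport s with d ∣ l, s.selbergTerms l :=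
      sum_nonneg fun l hl => (selbergTerms_pos_of_mem_selbergSupport (mem_filter.mp hl).1).le
    rw [selbergWeight, abs_div, abs_mul, abs_div, hμ, abs_of_pos hν, abs_of_nonneg hsum,
      abs_of_pos (selbergSum_pos s), div_le_one (selbergSum_pos s), one_div_mul_eq_div,
      div_le_iff₀' hν]
    exact sum_selbergTerms_multiples_le hdP
  · simp [selbergWeight_eq_zero_of_notMem hd]

variable (s) in
theorem errSum_lambdaSquared_selbergWeight_le :
    s.errSum (lambdaSquared (selbergWeight s)) ≤
      ∑ d₁ ∈ selbergSupport s, ∑ d₂ ∈ selbergSupport s, |s.rem (d₁.lcm d₂)| := by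
  have hsub : selbergSupport s ⊆ s.prodPrimes.divisors := filter_subset _ _
  calc s.errSum (lambdaSquared (selbergWeight s))
      ≤ ∑ d₁ ∈ s.prodPrimes.divisors, ∑ d₂ ∈ s.prodPrimes.divisors,
          |selbergWeight s d₁| * |selbergWeight s d₂| * |s.rem (d₁.lcm d₂)| :=
        errSum_lambdaSquared_le s.toBoundingSieve _
    _ = ∑ d₁ ∈ selbergSupport s, ∑ d₂ ∈ selbergSupport s,
          |selbergWeight s d₁| * |selbergWeight s d₂| * |s.rem (d₁.lcm d₂)| := by
        rw [← sum_subset hsub fun d₁ _ h₁ => by simp [selbergWeight_eq_zero_of_notMem h₁]]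
        refine sum_congr rfl fun d₁ _ => ?_
        rw [← sum_subset hsub fun d₂ _ h₂ => by simp [selbergWeight_eq_zero_of_notMem h₂]]
    _ ≤ _ := by
        refine sum_le_sum fun d₁ _ => sum_le_sum fun d₂ _ => ?_
        exact mul_le_of_le_one_left (abs_nonneg _) (mul_le_one₀ (abs_selbergWeight_le_one d₁)
          (abs_nonneg _) (abs_selbergWeight_le_one d₂))

variable (s) in
theorem siftedSum_le_totalMass_div_selbergSum_add :
    s.siftedSum ≤ s.totalMass / selbergSum s +
      ∑ d₁ ∈ selbergSupport s, ∑ d₂ ∈ selbergSupport s, |s.rem (d₁.lcm d₂)| := by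
  calc s.siftedSum
      ≤ s.totalMass * s.mainSum (lambdaSquared (selbergWeight s)) +
          s.errSum (lambdaSquared (selbergWeight s)) :=
        siftedSum_le_mainSum_errSum_of_upperMoebius _
          (upperMoebius_lambdaSquared _ (selbergWeight_one s))
    _ ≤ _ := by
        rw [mainSum_lambdaSquared_selbergWeight, div_eq_mul_inv]
        gcongr
        exact errSum_lambdaSquared_selbergWeight_le s

end SelbergSieve

section PrimeSieve

open Finset UniqueFactorizationMonoid BoundingSieve

/- Each `n` with radical `q` is `q` times an integer composed of primes dividing `q`, so the Euler
product over these primes bounds the sum. -/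
theorem sum_le_mul_prod_of_radical_eq {f : ℕ →* ℝ} (hf : ∀ n, 0 ≤ f n)
    (hf_prime : ∀ p : ℕ, p.Prime → f p < 1) {t : Finset ℕ} {q : ℕ}
    (ht : ∀ n ∈ t, n ≠ 0 ∧ radical n = q) :
    ∑ n ∈ t, f n ≤ f q * ∏ p ∈ q.primeFactors, (1 - f p)⁻¹ := by
  have euler_product : HasSum ((Nat.factoredNumbers q.primeFactors).indicator f)
      (∏ p ∈ q.primeFactors, (1 - f p)⁻¹) := by
    have norm_lt_one {p : ℕ} (hp : p.Prime) : ‖f p‖ < 1 := by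
      rw [Real.norm_of_nonneg (hf p)]
      exact hf_prime p hp
    have h := (EulerProduct.summable_and_hasSum_factoredNumbers_prod_filter_prime_geometric
      norm_lt_one q.primeFactors).2
    rw [filter_true_of_mem fun p => Nat.prime_of_mem_primeFactors] at h
    exact hasSum_subtype_iff_indicator.mp h
  have factorization : ∀ n ∈ t, ∃ k ∈ Nat.factoredNumbers q.primeFactors, n = q * k := by
    intro n hn
    obtain ⟨hn0, rfl⟩ := ht n hn
    obtain ⟨k, hk⟩ := radical_dvd_self (a := n)
    have hk0 : k ≠ 0 := by
      rintro rfl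
      exact hn0 (by rw [hk, mul_zero])
    refine ⟨k, Nat.mem_factoredNumbers_of_primeFactors_subset hk0 ?_, hk⟩
    rw [Nat.primeFactors_radical]
    exact Nat.primeFactors_mono (Dvd.intro_left _ hk.symm) hn0
  choose! k k_mem k_spec using factorization
  have k_injOn : Set.InjOn k t := fun a ha b hb hab => by rw [k_spec a ha, k_spec b hb, hab]
  calc ∑ n ∈ t, f n
      = ∑ n ∈ t, f q * (Nat.factoredNumbers q.primeFactors).indicator f (k n) := by
        refine sum_congr rfl fun n hn => ?_
        rw [Set.indicator_of_mem (k_mem n hn), ← map_mul, ← k_spec n hn]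
    _ = f q * ∑ j ∈ t.image k, (Nat.factoredNumbers q.primeFactors).indicator f j := by
        rw [← mul_sum, sum_image k_injOn]
    _ ≤ f q * ∏ p ∈ q.primeFactors, (1 - f p)⁻¹ :=
        mul_le_mul_of_nonneg_left
          (sum_le_hasSum _ (fun j _ => Set.indicator_nonneg (fun n _ => hf n) j) euler_product)
          (hf q)

theorem abs_card_Ioc_filter_dvd_sub_le (m n d : ℕ) :
    |(#{k ∈ Ioc m (m + n) | d ∣ k} : ℝ) - n / d| ≤ 1 := by
  have card_eq : #{k ∈ Ioc m (m + n) | d ∣ k} + m / d = (m + n) / d := by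
    rw [← Nat.Ioc_filter_dvd_card_eq_div m d, ← Nat.Ioc_filter_dvd_card_eq_div (m + n) d,
      ← card_union_of_disjoint, ← filter_union, union_comm,
      Ioc_union_Ioc_eq_Ioc (Nat.zero_le m) (Nat.le_add_right m n)]
    exact disjoint_filter_filter (Ioc_disjoint_Ioc_of_le le_rfl).symm
  have floor_bounds (a : ℕ) : ((a / d : ℕ) : ℝ) ≤ a / d ∧ (a : ℝ) / d < (a / d : ℕ) + 1 := by
    refine ⟨Nat.cast_div_le, ?_⟩
    rw [← Nat.floor_div_eq_div (K := ℝ)]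
    exact Nat.lt_floor_add_one _
  have card_eq' : (#{k ∈ Ioc m (m + n) | d ∣ k} : ℝ) + (m / d : ℕ) = ((m + n) / d : ℕ) :=
    mod_cast card_eq
  have split : ((m + n : ℕ) : ℝ) / d = m / d + n / d := by
    rw [Nat.cast_add, add_div]
  obtain ⟨lower, upper⟩ := floor_bounds m
  obtain ⟨lower', upper'⟩ := floor_bounds (m + n)
  rw [abs_le]
  constructor <;> linarith

/-- The arithmetic function `n ↦ 1 / n`, the sieve density of an interval (it is `0` at `0`). -/
noncomputable def natReciprocal : ArithmeticFunction ℝ := ⟨fun n => (n : ℝ)⁻¹, by simp⟩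

theorem natReciprocal_apply (n : ℕ) : natReciprocal n = (n : ℝ)⁻¹ := rfl

theorem natReciprocal_isMultiplicative : natReciprocal.IsMultiplicative :=
  ⟨by simp [natReciprocal_apply], fun _ => by simp [natReciprocal_apply, mul_comm]⟩

/-- The Selberg sieve removing from the interval `(m, m + n]` the multiples of the primes up to `z`,
with level `z ^ 2`, so that the weights are supported on moduli up to `z`. -/
noncomputable def intervalSieve (m n z : ℕ) (hz : 1 ≤ z) : SelbergSieve where
  support := Ioc m (m + n)
  prodPrimes := primorial z
  prodPrimes_squarefree := squarefree_primorial z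
  weights _ := 1
  weights_nonneg _ := zero_le_one
  totalMass := n
  nu := natReciprocal
  nu_mult := natReciprocal_isMultiplicative
  nu_pos_of_prime _ hp _ := inv_pos.mpr (mod_cast hp.pos)
  nu_lt_one_of_prime _ hp _ := inv_lt_one_of_one_lt₀ (mod_cast hp.one_lt)
  level := (z : ℝ) ^ 2
  one_le_level := one_le_pow₀ (mod_cast hz)

variable {m n z : ℕ} {hz : 1 ≤ z}

theorem mem_selbergSupport_intervalSieve {d : ℕ} :
    d ∈ selbergSupport (intervalSieve m n z hz) ↔ Squarefree d ∧ d ≤ z := by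
  simp only [mem_selbergSupport, intervalSieve]
  rw [pow_le_pow_iff_left₀ (by positivity) (by positivity) two_ne_zero, Nat.cast_le]
  exact and_congr_left fun hdz => ⟨(squarefree_primorial z).squarefree_of_dvd,
    fun hd => hd.dvd_primorial.trans (primorial_dvd_primorial hdz)⟩

theorem card_selbergSupport_intervalSieve_le :
    #(selbergSupport (intervalSieve m n z hz)) ≤ z := by
  refine (card_le_card fun d hd => ?_).trans_eq (Nat.card_Icc 1 z)
  obtain ⟨hsq, hdz⟩ := mem_selbergSupport_intervalSieve.mp hd
  exact mem_Icc.mpr ⟨Nat.pos_of_ne_zero hsq.ne_zero, hdz⟩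

theorem abs_rem_intervalSieve_le_one (d : ℕ) : |(intervalSieve m n z hz).rem d| ≤ 1 := by
  have rem_eq : (intervalSieve m n z hz).rem d = #{k ∈ Ioc m (m + n) | d ∣ k} - n / d := by
    simp [intervalSieve, natReciprocal_apply, div_eq_inv_mul]
  rw [rem_eq]
  exact abs_card_Ioc_filter_dvd_sub_le m n d

/-- The number of primes in the interval `(m, m + n]`. -/
def primeCountIoc (m n : ℕ) : ℕ := #{p ∈ Ioc m (m + n) | p.Prime}

theorem primeCountIoc_le_siftedSum (hzm : z ≤ m) :
    primeCountIoc m n ≤ (intervalSieve m n z hz).siftedSum := by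
  have siftedSum_eq : (intervalSieve m n z hz).siftedSum =
      #{k ∈ Ioc m (m + n) | (primorial z).Coprime k} := by
    rw [natCast_card_filter]
    rfl
  rw [siftedSum_eq, Nat.cast_le, primeCountIoc]
  refine card_le_card fun p hp => ?_
  obtain ⟨hp_mem, hprime⟩ := mem_filter.mp hp
  refine mem_filter.mpr ⟨hp_mem, ?_⟩
  rw [Nat.coprime_comm, hprime.coprime_iff_not_dvd, hprime.dvd_primorial_iff]
  have := mem_Ioc.mp hp_mem
  omega

theorem harmonic_le_selbergSum_intervalSieve :
    (harmonic z : ℝ) ≤ selbergSum (intervalSieve m n z hz) := by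
  let f : ℕ →* ℝ := (invMonoidWithZeroHom.comp (Nat.castRingHom ℝ).toMonoidWithZeroHom).toMonoidHom
  have f_apply (k : ℕ) : f k = (k : ℝ)⁻¹ := rfl
  have radical_mem : ∀ k ∈ Icc 1 z, radical k ∈ selbergSupport (intervalSieve m n z hz) := by
    intro k hk
    obtain ⟨hk1, hkz⟩ := mem_Icc.mp hk
    exact mem_selbergSupport_intervalSieve.mpr
      ⟨squarefree_radical, (Nat.radical_le_self_iff.mpr (by omega)).trans hkz⟩
  calc (harmonic z : ℝ)
      = ∑ k ∈ Icc 1 z, f k := by simp [harmonic_eq_sum_Icc, f_apply]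
    _ = ∑ q ∈ selbergSupport (intervalSieve m n z hz), ∑ k ∈ Icc 1 z with radical k = q, f k :=
        (sum_fiberwise_of_maps_to radical_mem _).symm
    _ ≤ selbergSum (intervalSieve m n z hz) := by
        refine sum_le_sum fun q _ => ?_
        rw [selbergTerms_apply]
        refine sum_le_mul_prod_of_radical_eq (f := f) (fun k => inv_nonneg.mpr k.cast_nonneg)
          (fun p hp => ?_) fun k hk => ?_
        · rw [f_apply]
          exact inv_lt_one_of_one_lt₀ (mod_cast hp.one_lt)
        · obtain ⟨hk_mem, hq⟩ := mem_filter.mp hk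
          exact ⟨Nat.one_le_iff_ne_zero.mp (mem_Icc.mp hk_mem).1, hq⟩

theorem primeCountIoc_le_div_harmonic_add_sq (hz : 1 ≤ z) (hzm : z ≤ m) :
    (primeCountIoc m n : ℝ) ≤ n / harmonic z + (z : ℝ) ^ 2 := by
  let s := intervalSieve m n z hz
  have harmonic_pos : (0 : ℝ) < harmonic z := mod_cast harmonic_pos (by omega)
  have error_le : ∑ d₁ ∈ selbergSupport s, ∑ d₂ ∈ selbergSupport s, |s.rem (d₁.lcm d₂)| ≤
      (z : ℝ) ^ 2 := by
    calc ∑ d₁ ∈ selbergSupport s, ∑ d₂ ∈ selbergSupport s, |s.rem (d₁.lcm d₂)|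
        ≤ ∑ _d₁ ∈ selbergSupport s, ∑ _d₂ ∈ selbergSupport s, 1 :=
          sum_le_sum fun d₁ _ => sum_le_sum fun d₂ _ => abs_rem_intervalSieve_le_one _
      _ = (#(selbergSupport s) : ℝ) ^ 2 := by simp [sq]
      _ ≤ (z : ℝ) ^ 2 := by
          gcongr
          exact card_selbergSupport_intervalSieve_le
  calc (primeCountIoc m n : ℝ)
      ≤ s.siftedSum := primeCountIoc_le_siftedSum hzm
    _ ≤ n / selbergSum s +
          ∑ d₁ ∈ selbergSupport s, ∑ d₂ ∈ selbergSupport s, |s.rem (d₁.lcm d₂)| :=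
        siftedSum_le_totalMass_div_selbergSum_add s
    _ ≤ n / harmonic z + (z : ℝ) ^ 2 := by
        gcongr
        exact harmonic_le_selbergSum_intervalSieve

end PrimeSieve

section BrunTitchmarsh

open Real

theorem log_add_half_le_harmonic {z : ℕ} (hz : 6 ≤ z) : log (z + 1) + 1 / 2 ≤ harmonic z := by
  have h : 1 / 2 < (harmonic z : ℝ) - log (z + 1) :=
    one_half_lt_eulerMascheroniSeq_six.trans_le (strictMono_eulerMascheroniSeq.monotone hz)
  linarith

/-- For `log n ≥ 9`, an interval of length `n` lying beyond `n` contains at most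
`n * primeDensity (log n)` primes. The coefficient `3.3` absorbs the error terms of the sieve. -/
noncomputable def primeDensity (u : ℝ) : ℝ := 2 / u + 3.3 / (u * √u)

theorem primeDensity_nonneg {u : ℝ} (hu : 0 ≤ u) : 0 ≤ primeDensity u := by
  unfold primeDensity
  positivity

theorem log_sq_le_half_sub_two_add {s : ℝ} (hs : 0 < s) : log (s ^ 2) ≤ s / 2 - 2 + 4 * log 2 := by
  have tangent_at_four : log (s / 4) ≤ s / 4 - 1 := log_le_sub_one_of_pos (by positivity)
  rw [log_div hs.ne' (by norm_num), show (4 : ℝ) = 2 ^ 2 by norm_num, log_pow] at tangent_at_four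
  rw [log_pow]
  push_cast at tangent_at_four ⊢
  linarith

theorem two_div_add_four_div_le {s : ℝ} (hs : 3 ≤ s) :
    2 / (s ^ 2 - s + 0.84) + 4 / s ^ 4 ≤ 2 / s ^ 2 + 3.3 / s ^ 3 := by
  have : 0 < s := by linarith
  have hD : 0 < s ^ 2 - s + 0.84 := by nlinarith
  have cubic_nonneg : 0 ≤ 1.3 * s ^ 3 - 5.62 * s ^ 2 + 6.772 * s - 3.36 := by
    have expand_at_three : 1.3 * s ^ 3 - 5.62 * s ^ 2 + 6.772 * s - 3.36 =
        1.3 * (s - 3) ^ 3 + 6.08 * (s - 3) ^ 2 + 8.152 * (s - 3) + 1.476 := by ring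
    have := sub_nonneg.mpr hs
    rw [expand_at_three]
    positivity
  rw [← sub_nonneg]
  calc 0 ≤ (1.3 * s ^ 3 - 5.62 * s ^ 2 + 6.772 * s - 3.36) / (s ^ 4 * (s ^ 2 - s + 0.84)) := by
        positivity
    _ = _ := by
        generalize hd : s ^ 2 - s + 0.84 = D at hD
        field_simp
        rw [← hd]
        ring

theorem inv_log_add_sq_le_primeDensity {u : ℝ} (hu : 9 ≤ u) :
    1 / (log (2 * exp (u / 2) / u) + 1 / 2) + (2 / u) ^ 2 ≤ primeDensity u := by
  have log_eq : log (2 * exp (u / 2) / u) = log 2 + u / 2 - log u := by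
    rw [log_div (by positivity) (by positivity), log_mul two_ne_zero (exp_ne_zero _), log_exp]
  obtain ⟨s, hs, rfl⟩ : ∃ s, 3 ≤ s ∧ s ^ 2 = u :=
    ⟨√u, le_sqrt_of_sq_le (by linarith), sq_sqrt (by linarith)⟩
  have hD : 0 < (s ^ 2 - s + 0.84) / 2 := by nlinarith
  have denominator_ge : (s ^ 2 - s + 0.84) / 2 ≤ log 2 + s ^ 2 / 2 - log (s ^ 2) + 1 / 2 := by
    linarith [log_sq_le_half_sub_two_add (show 0 < s by linarith), log_two_lt_d9]
  calc 1 / (log (2 * exp (s ^ 2 / 2) / s ^ 2) + 1 / 2) + (2 / s ^ 2) ^ 2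
      ≤ 1 / ((s ^ 2 - s + 0.84) / 2) + (2 / s ^ 2) ^ 2 := by
        rw [log_eq]
        gcongr
    _ = 2 / (s ^ 2 - s + 0.84) + 4 / s ^ 4 := by
        rw [one_div_div, div_pow]
        norm_num [← pow_mul]
    _ ≤ 2 / s ^ 2 + 3.3 / s ^ 3 := two_div_add_four_div_le hs
    _ = primeDensity (s ^ 2) := by
        rw [primeDensity, sqrt_sq (by linarith), ← pow_succ]

theorem three_mul_le_exp_half {u : ℝ} (hu : 9 ≤ u) : 3 * u ≤ exp (u / 2) := by
  have quadratic : 1 + u / 4 + (u / 4) ^ 2 / 2 ≤ exp (u / 4) :=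
    quadratic_le_exp_of_nonneg (by linarith)
  have linear : 0.64 * u ≤ exp (u / 4) := by nlinarith
  calc 3 * u ≤ (0.64 * u) ^ 2 := by nlinarith
    _ ≤ exp (u / 4) ^ 2 := by gcongr
    _ = exp (u / 2) := by
        rw [← exp_nat_mul]
        ring_nf

/- The sieve is run with `z = ⌊2 √n / log n⌋`. -/
theorem primeCountIoc_le_mul_primeDensity {m n : ℕ} (hnm : n ≤ m) (hn : 9 ≤ log n) :
    primeCountIoc m n ≤ n * primeDensity (log n) := by
  have hn0 : (0 : ℝ) < n := by
    refine n.cast_nonneg.lt_of_ne' fun h => ?_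
    norm_num [h] at hn
  have exp_half_sq : exp (log n / 2) ^ 2 = n := by
    rw [← exp_nat_mul, Nat.cast_ofNat, mul_div_cancel₀ _ two_ne_zero, exp_log hn0]
  obtain ⟨u, hu⟩ : ∃ u, u = log n := ⟨_, rfl⟩
  rw [← hu] at hn exp_half_sq ⊢
  have hu0 : 0 < u := by linarith
  have exp_ge : 3 * u ≤ exp (u / 2) := three_mul_le_exp_half hn
  set y := 2 * exp (u / 2) / u with hy
  have six_le_y : 6 ≤ y := by
    rw [hy, le_div_iff₀ hu0]
    linarith
  have y_le_n : y ≤ n := by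
    rw [hy, div_le_iff₀ hu0, ← exp_half_sq]
    nlinarith
  have six_le_floor : 6 ≤ ⌊y⌋₊ := Nat.le_floor (mod_cast six_le_y)
  have log_le : log y + 1 / 2 ≤ harmonic ⌊y⌋₊ :=
    le_trans (by gcongr; exact (Nat.lt_floor_add_one y).le) (log_add_half_le_harmonic six_le_floor)
  have log_pos : 0 < log y := log_pos (by linarith)
  calc (primeCountIoc m n : ℝ)
      ≤ n / harmonic ⌊y⌋₊ + (⌊y⌋₊ : ℝ) ^ 2 := primeCountIoc_le_div_harmonic_add_sq
        (by omega) ((Nat.floor_le_of_le y_le_n).trans hnm)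
    _ ≤ n / (log y + 1 / 2) + y ^ 2 := by
        gcongr
        exact Nat.floor_le (by linarith)
    _ = n * (1 / (log y + 1 / 2) + (2 / u) ^ 2) := by
        have y_sq : y ^ 2 = n * (2 / u) ^ 2 := by
          rw [hy, ← exp_half_sq]
          ring
        rw [y_sq, mul_add, mul_one_div]
    _ ≤ n * primeDensity u := by
        gcongr
        exact inv_log_add_sq_le_primeDensity hn

/-- A primitive of `primeDensity`. -/
noncomputable def primeDensityPrimitive (u : ℝ) : ℝ := 2 * log u - 6.6 / √u

theorem primeDensity_mul_sub_le {a b : ℝ} (ha : 0 < a) (hab : a ≤ b) :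
    primeDensity b * (b - a) ≤ primeDensityPrimitive b - primeDensityPrimitive a := by
  have hb : 0 < b := ha.trans_le hab
  have log_part : 2 / b * (b - a) ≤ 2 * log b - 2 * log a := by
    have h := one_sub_inv_le_log_of_pos (div_pos hb ha)
    rw [log_div hb.ne' ha.ne', inv_div] at h
    calc 2 / b * (b - a) = 2 * (1 - a / b) := by field_simp
      _ ≤ 2 * log b - 2 * log a := by linarith
  have sqrt_part : 3.3 / (b * √b) * (b - a) ≤ 6.6 / √a - 6.6 / √b := by
    obtain ⟨s, hs, rfl⟩ : ∃ s, 0 < s ∧ s ^ 2 = a := ⟨√a, sqrt_pos.mpr ha, sq_sqrt ha.le⟩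
    obtain ⟨t, ht, rfl⟩ : ∃ t, 0 < t ∧ t ^ 2 = b := ⟨√b, sqrt_pos.mpr hb, sq_sqrt hb.le⟩
    rw [sqrt_sq hs.le, sqrt_sq ht.le, ← sub_nonneg]
    calc 0 ≤ 3.3 * (t - s) ^ 2 * (2 * t + s) / (t ^ 3 * s) := by positivity
      _ = _ := by
        field_simp
        ring
  rw [primeDensity, add_mul, primeDensityPrimitive, primeDensityPrimitive]
  linarith

theorem primeDensityPrimitive_le_of_le {a b : ℝ} (ha : 0 < a) (hab : a ≤ b) :
    primeDensityPrimitive a ≤ primeDensityPrimitive b := by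
  have hb : 0 < b := ha.trans_le hab
  have h := (mul_nonneg (primeDensity_nonneg hb.le) (sub_nonneg.mpr hab)).trans
    (primeDensity_mul_sub_le ha hab)
  linarith

end BrunTitchmarsh

section Wheel

open Finset

theorem primeCountIoc_zero (m : ℕ) : primeCountIoc m 0 = 0 := by
  simp [primeCountIoc]

theorem primeCountIoc_succ (m i : ℕ) :
    primeCountIoc m (i + 1) = primeCountIoc m i + if (m + i + 1).Prime then 1 else 0 := by
  rw [primeCountIoc, primeCountIoc, card_filter, card_filter, ← add_assoc,
    sum_Ioc_succ_top (by omega)]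

/- `(k + 5) / 6 + (k + 1) / 6` counts the numbers up to `k` that are `±1` modulo `6`. -/
theorem primeCountIoc_add_le {m : ℕ} (hm : 3 ≤ m) (i : ℕ) :
    primeCountIoc m i + ((m + 5) / 6 + (m + 1) / 6) ≤ (m + i + 5) / 6 + (m + i + 1) / 6 := by
  induction i with
  | zero => simp [primeCountIoc_zero]
  | succ i ih =>
    rw [primeCountIoc_succ]
    split_ifs with hp
    · have two_not_dvd : ¬ 2 ∣ m + i + 1 := by
        rw [Nat.prime_dvd_prime_iff_eq Nat.prime_two hp]
        omega
      have three_not_dvd : ¬ 3 ∣ m + i + 1 := by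
        rw [Nat.prime_dvd_prime_iff_eq Nat.prime_three hp]
        omega
      obtain h | h : (m + i + 1) % 6 = 1 ∨ (m + i + 1) % 6 = 5 := by omega
      all_goals omega
    · omega

theorem primeCountIoc_le_div_three_add_one {m : ℕ} (hm : 3 ≤ m) (i : ℕ) :
    (primeCountIoc m i : ℝ) ≤ i / 3 + 1 := by
  have h : 3 * primeCountIoc m i ≤ i + 3 := by
    have := primeCountIoc_add_le hm i
    omega
  have h' : (3 : ℝ) * primeCountIoc m i ≤ i + 3 := mod_cast h
  linarith

end Wheel

section PartialSummation

open Finset Real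

theorem one_div_sq_sub_quarter {x : ℝ} (h_sub : x - 1 / 2 ≠ 0) (h_add : x + 1 / 2 ≠ 0) :
    1 / (x ^ 2 - 1 / 4) = 1 / (x - 1 / 2) - 1 / (x + 1 / 2) := by
  rw [div_sub_div _ _ h_sub h_add]
  congr 1 <;> ring

theorem sum_range_sub_div_add_half (A : ℕ → ℝ) (hA : A 0 = 0) (n : ℕ) :
    ∑ i ∈ range n, (A (i + 1) - A i) / (i + 1 / 2) =
      A n / (n - 1 / 2) + ∑ i ∈ range n, A i / ((i : ℝ) ^ 2 - 1 / 4) := by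
  induction n with
  | zero => simp [hA]
  | succ n ih =>
    have h_sub : (n : ℝ) - 1 / 2 ≠ 0 := by
      intro h
      have h2 : (2 * n : ℝ) = 1 := by linarith
      norm_cast at h2
      omega
    rw [sum_range_succ, sum_range_succ, ih, div_eq_mul_one_div (A n) ((n : ℝ) ^ 2 - 1 / 4),
      one_div_sq_sub_quarter h_sub (by positivity)]
    push_cast
    ring

theorem div_sq_sub_le_log_sub_log {x : ℝ} (hx : 1 < x) :
    x / (x ^ 2 - 1 / 4) ≤ log x - log (x - 1) := by
  have hx0 : 0 < x - 1 := by linarith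
  have h := le_log_one_add_of_nonneg (one_div_nonneg.mpr hx0.le)
  calc x / (x ^ 2 - 1 / 4) ≤ 1 / (x - 1 / 2) := by
        rw [div_le_div_iff₀ (by nlinarith) (by linarith)]
        nlinarith
    _ = 2 * (1 / (x - 1)) / (1 / (x - 1) + 2) := by
        have : (x - 1) * 2 + 1 ≠ 0 := by linarith
        rw [show x - 1 / 2 = ((x - 1) * 2 + 1) / 2 by ring]
        field_simp
        ring
    _ ≤ log (1 + 1 / (x - 1)) := h
    _ = log x - log (x - 1) := by
        rw [one_add_div hx0.ne', sub_add_cancel, log_div (by linarith) hx0.ne']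

theorem sum_Ico_div_sq_sub_le {A : ℕ → ℝ} {h H : ℝ → ℝ} {c : ℝ} {k n : ℕ} (hk : 2 ≤ k)
    (hkn : k ≤ n) (h_nonneg : ∀ i ∈ Ico k n, 0 ≤ h (log i))
    (hA : ∀ i ∈ Ico k n, A i ≤ i * h (log i) + c)
    (hH : ∀ i ∈ Ico k n, h (log i) * (log i - log ((i : ℝ) - 1)) ≤
      H (log i) - H (log ((i : ℝ) - 1))) :
    ∑ i ∈ Ico k n, A i / ((i : ℝ) ^ 2 - 1 / 4) ≤
      H (log ((n : ℝ) - 1)) - H (log ((k : ℝ) - 1)) +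
        c * (1 / ((k : ℝ) - 1 / 2) - 1 / ((n : ℝ) - 1 / 2)) := by
  let F (i : ℕ) : ℝ := H (log ((i : ℝ) - 1)) - c / ((i : ℝ) - 1 / 2)
  have summand_le : ∀ i ∈ Ico k n, A i / ((i : ℝ) ^ 2 - 1 / 4) ≤ F (i + 1) - F i := by
    intro i hi
    have hi2 : (2 : ℝ) ≤ i := mod_cast hk.trans (mem_Ico.mp hi).1
    have hsq : 0 < (i : ℝ) ^ 2 - 1 / 4 := by nlinarith
    calc A i / ((i : ℝ) ^ 2 - 1 / 4)
        ≤ (i * h (log i) + c) / ((i : ℝ) ^ 2 - 1 / 4) := by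
          gcongr
          exact hA i hi
      _ = h (log i) * (i / ((i : ℝ) ^ 2 - 1 / 4)) +
            (c / ((i : ℝ) - 1 / 2) - c / ((i : ℝ) + 1 / 2)) := by
          rw [add_div, div_eq_mul_one_div c, one_div_sq_sub_quarter (by linarith) (by linarith)]
          ring
      _ ≤ H (log i) - H (log ((i : ℝ) - 1)) +
            (c / ((i : ℝ) - 1 / 2) - c / ((i : ℝ) + 1 / 2)) := by
          gcongr
          exact (mul_le_mul_of_nonneg_left (div_sq_sub_le_log_sub_log (by linarith))
            (h_nonneg i hi)).trans (hH i hi)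
      _ = F (i + 1) - F i := by
          simp only [F, Nat.cast_add, Nat.cast_one, add_sub_cancel_right]
          ring_nf
  calc ∑ i ∈ Ico k n, A i / ((i : ℝ) ^ 2 - 1 / 4)
      ≤ ∑ i ∈ Ico k n, (F (i + 1) - F i) := sum_le_sum summand_le
    _ = F n - F k := sum_Ico_sub F hkn
    _ = _ := by
        simp only [F]
        ring

end PartialSummation

section PrimeSum

open Finset Real

theorem sum_primes_Ioc_eq_sum_range (m n : ℕ) (f : ℕ → ℝ) :
    ∑ p ∈ Ioc m (m + n) with p.Prime, f p =
      ∑ i ∈ range n, ((primeCountIoc m (i + 1) : ℝ) - primeCountIoc m i) * f (m + i + 1) := by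
  induction n with
  | zero => simp
  | succ n ih =>
    rw [sum_filter] at ih ⊢
    rw [sum_range_succ, ← ih, ← add_assoc, sum_Ioc_succ_top (by omega), primeCountIoc_succ]
    split_ifs <;> simp

theorem half_integer_lt_and_lt_iff_mem_Ioc {m p : ℕ} :
    ((m : ℝ) + 1 / 2 < p ∧ (p : ℝ) < 3 * (m + 1 / 2) / 2) ↔ p ∈ Ioc m (m + (m + 1) / 2) := by
  have lower_iff : (m : ℝ) + 1 / 2 < p ↔ 2 * m + 1 < 2 * p := by
    rw [← Nat.cast_lt (α := ℝ)]
    push_cast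
    constructor <;> intro h <;> linarith
  have upper_iff : (p : ℝ) < 3 * (m + 1 / 2) / 2 ↔ 4 * p < 6 * m + 3 := by
    rw [← Nat.cast_lt (α := ℝ)]
    push_cast
    constructor <;> intro h <;> linarith
  rw [lower_iff, upper_iff, mem_Ioc]
  omega

theorem tsum_primes_half_integer_eq (m : ℕ) :
    (∑' p : ℕ, if p.Prime ∧ (m + 1 / 2 : ℝ) < p ∧ (p : ℝ) < 3 * (m + 1 / 2) / 2 then
      1 / ((p : ℝ) - (m + 1 / 2)) else 0) =
      primeCountIoc m ((m + 1) / 2) / (((m + 1) / 2 : ℕ) - 1 / 2 : ℝ) +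
        ∑ i ∈ range ((m + 1) / 2), primeCountIoc m i / ((i : ℝ) ^ 2 - 1 / 4) := by
  rw [← sum_range_sub_div_add_half (fun i => (primeCountIoc m i : ℝ))
    (by simp [primeCountIoc_zero])]
  calc _ = ∑ p ∈ Ioc m (m + (m + 1) / 2) with p.Prime, 1 / ((p : ℝ) - (m + 1 / 2)) := by
        simp_rw [half_integer_lt_and_lt_iff_mem_Ioc]
        rw [tsum_eq_sum (s := Ioc m (m + (m + 1) / 2)) fun p hp => if_neg fun h => hp h.2,
          sum_filter]
        exact sum_congr rfl fun p hp => by simp only [hp, and_true]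
    _ = _ := by
        rw [sum_primes_Ioc_eq_sum_range]
        refine sum_congr rfl fun i _ => ?_
        rw [mul_one_div]
        push_cast
        ring_nf

theorem sum_range_primeCountIoc_le {m n : ℕ} (hm : 3 ≤ m) (hn : 2 ≤ n) :
    ∑ i ∈ range n, primeCountIoc m i / ((i : ℝ) ^ 2 - 1 / 4) ≤
      2 + log ((n : ℝ) - 1) / 3 - 1 / ((n : ℝ) - 1 / 2) := by
  have count_one_le : (primeCountIoc m 1 : ℝ) ≤ 1 := by
    rw [← zero_add 1, primeCountIoc_succ, primeCountIoc_zero]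
    split_ifs <;> simp
  have first_two : ∑ i ∈ range 2, primeCountIoc m i / ((i : ℝ) ^ 2 - 1 / 4) ≤ 4 / 3 := by
    simp only [sum_range_succ, sum_range_zero, primeCountIoc_zero]
    norm_num
    linarith
  have rest := sum_Ico_div_sq_sub_le (A := fun i => (primeCountIoc m i : ℝ)) (h := fun _ => 1 / 3)
    (H := fun u => u / 3) (c := 1) le_rfl hn (fun _ _ => by norm_num)
    (fun i _ => (primeCountIoc_le_div_three_add_one hm i).trans_eq (by ring))
    (fun i _ => le_of_eq (by ring))
  norm_num at rest
  rw [← sum_range_add_sum_Ico _ hn]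
  norm_num at first_two ⊢
  linarith

theorem log_8192 : log 8192 = 13 * log 2 := by
  rw [show (8192 : ℝ) = 2 ^ 13 by norm_num, log_pow]
  norm_num

theorem nine_le_log_8192 : 9 ≤ log 8192 := by
  linarith [log_8192, log_two_gt_d9]

theorem sum_range_primeCountIoc_le_add_primeDensityPrimitive {m n : ℕ} (hn : 8193 ≤ n)
    (hnm : n ≤ m) :
    ∑ i ∈ range n, primeCountIoc m i / ((i : ℝ) ^ 2 - 1 / 4) ≤
      2 + 13 * log 2 / 3 +
        (primeDensityPrimitive (log ((n : ℝ) - 1)) - primeDensityPrimitive (log 8192)) := by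
  have initial := sum_range_primeCountIoc_le (m := m) (n := 8193) (by omega) (by norm_num)
  have log_bounds : ∀ i ∈ Ico 8193 n,
      9 ≤ log ((i : ℝ) - 1) ∧ log ((i : ℝ) - 1) ≤ log i := by
    intro i hi
    have hi' : (8193 : ℝ) ≤ i := mod_cast (mem_Ico.mp hi).1
    exact ⟨nine_le_log_8192.trans (log_le_log (by norm_num) (by linarith)),
      log_le_log (by linarith) (by linarith)⟩
  have tail := sum_Ico_div_sq_sub_le (A := fun i => (primeCountIoc m i : ℝ)) (h := primeDensity)
    (H := primeDensityPrimitive) (c := 0) (by norm_num) hn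
    (fun i hi => primeDensity_nonneg (by linarith [log_bounds i hi]))
    (fun i hi => by
      rw [add_zero]
      exact primeCountIoc_le_mul_primeDensity ((mem_Ico.mp hi).2.le.trans hnm)
        (by linarith [log_bounds i hi]))
    (fun i hi => primeDensity_mul_sub_le (by linarith [log_bounds i hi]) (log_bounds i hi).2)
  rw [← sum_range_add_sum_Ico _ hn]
  norm_num [log_8192] at initial tail ⊢
  linarith

theorem add_div_three_le_add_two_mul_log {w L : ℝ} (hw : w ≤ 13 * log 2) (hL : w + log 2 ≤ L)
    (hL1 : 1 ≤ L) : 22 / 9 + w / 3 ≤ 2.892 + 2 * log L := by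
  have := log_two_gt_d9
  have := log_two_lt_d9
  rcases le_or_gt w (4 / 3) with w_le | lt_w
  · linarith [log_nonneg hL1]
  rcases le_or_gt w 5.5 with w_le | lt_w'
  · have : log 2 ≤ log L := log_le_log (by norm_num) (by linarith)
    linarith
  · have : log (2 ^ 2) ≤ log L := log_le_log (by norm_num) (by linarith)
    rw [log_pow] at this
    push_cast at this
    linarith

theorem six_log_two_sub_le_primeDensityPrimitive_nine :
    6 * log 2 + 4 / 17 - 2.2 ≤ primeDensityPrimitive 9 := by
  have log_ge : 2 / 17 ≤ log (9 / 8) := by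
    have h := le_log_one_add_of_nonneg (show (0 : ℝ) ≤ 1 / 8 by norm_num)
    norm_num at h ⊢
    exact h
  have log_nine : log 9 = 3 * log 2 + log (9 / 8) := by
    rw [show (9 : ℝ) = 2 ^ 3 * (9 / 8) by norm_num, log_mul (by norm_num) (by norm_num), log_pow]
    norm_num
  have sqrt_nine : √(9 : ℝ) = 3 := by
    rw [show (9 : ℝ) = 3 ^ 2 by norm_num, sqrt_sq (by norm_num)]
  rw [primeDensityPrimitive, log_nine, sqrt_nine]
  linarith

theorem primeDensity_le_div_sqrt {u : ℝ} (hu : 4 ≤ u) : primeDensity u ≤ 3.3 / √u := by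
  obtain ⟨s, hs, rfl⟩ : ∃ s, 2 ≤ s ∧ s ^ 2 = u :=
    ⟨√u, le_sqrt_of_sq_le (by linarith), sq_sqrt (by linarith)⟩
  have : 0 < s := by linarith
  have numerator_nonneg : 0 ≤ 3.3 * s ^ 2 - 2 * s - 3.3 := by nlinarith
  rw [primeDensity, sqrt_sq (by linarith), ← sub_nonneg]
  calc 0 ≤ (3.3 * s ^ 2 - 2 * s - 3.3) / s ^ 3 := by positivity
    _ = _ := by
      field_simp
      ring

/- The boundary term is absorbed by the `-6.6 / √u` in the primitive of the density. -/
theorem primeCountIoc_div_add_primeDensityPrimitive_le {m n : ℕ} (hnm : n ≤ m)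
    (hn : 9 ≤ log n) :
    primeCountIoc m n / ((n : ℝ) - 1 / 2) + primeDensityPrimitive (log n) ≤ 2 * log (log n) := by
  have one_le : (1 : ℝ) ≤ n := by
    rw [Nat.one_le_cast, Nat.one_le_iff_ne_zero]
    rintro rfl
    norm_num at hn
  have boundary : primeCountIoc m n / ((n : ℝ) - 1 / 2) ≤ 6.6 / √(log n) := by
    rw [div_le_iff₀ (by linarith)]
    calc (primeCountIoc m n : ℝ)
        ≤ n * (3.3 / √(log n)) := (primeCountIoc_le_mul_primeDensity hnm hn).trans
          (by gcongr; exact primeDensity_le_div_sqrt (by linarith))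
      _ ≤ (2 * (n - 1 / 2)) * (3.3 / √(log n)) := by
          gcongr
          linarith
      _ = 6.6 / √(log n) * (n - 1 / 2) := by ring
  rw [primeDensityPrimitive]
  linarith

theorem primeCountIoc_div_add_sum_le_of_le {m n : ℕ} (hm : 3 ≤ m) (hn : 2 ≤ n)
    (hnm : 2 * n ≤ m + 1) (hn_le : n ≤ 8192) :
    primeCountIoc m n / ((n : ℝ) - 1 / 2) +
      ∑ i ∈ range n, primeCountIoc m i / ((i : ℝ) ^ 2 - 1 / 4) ≤
      2.892 + 2 * log (log (m + 1 / 2)) := by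
  have hm' : (3 : ℝ) ≤ m := mod_cast hm
  have hn' : (2 : ℝ) ≤ n := mod_cast hn
  have hnm' : (2 * n : ℝ) ≤ m + 1 := mod_cast hnm
  have hn_le' : (n : ℝ) ≤ 8192 := mod_cast hn_le
  have boundary : primeCountIoc m n / ((n : ℝ) - 1 / 2) ≤ 4 / 9 + 1 / ((n : ℝ) - 1 / 2) := by
    have hpos : 0 < (n : ℝ) - 1 / 2 := by linarith
    rw [div_add_div _ _ (by norm_num) hpos.ne', div_le_div_iff₀ hpos (by positivity)]
    nlinarith [primeCountIoc_le_div_three_add_one hm n]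
  have log_le : log ((n : ℝ) - 1) ≤ 13 * log 2 := by
    rw [← log_8192]
    exact log_le_log (by linarith) (by linarith)
  have log_add_le : log ((n : ℝ) - 1) + log 2 ≤ log (m + 1 / 2) := by
    rw [← log_mul (by linarith) two_ne_zero]
    exact log_le_log (by linarith) (by linarith)
  have one_le_log : 1 ≤ log (m + 1 / 2 : ℝ) := by
    rw [le_log_iff_exp_le (by linarith)]
    linarith [exp_one_lt_d9]
  linarith [sum_range_primeCountIoc_le hm hn,
    add_div_three_le_add_two_mul_log log_le log_add_le one_le_log]

theorem primeCountIoc_div_add_sum_le_of_ge {m n : ℕ} (hn : 8193 ≤ n) (hnm : n ≤ m) :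
    primeCountIoc m n / ((n : ℝ) - 1 / 2) +
      ∑ i ∈ range n, primeCountIoc m i / ((i : ℝ) ^ 2 - 1 / 4) ≤
      2.892 + 2 * log (log (m + 1 / 2)) := by
  have hn' : (8193 : ℝ) ≤ n := mod_cast hn
  have hnm' : (n : ℝ) ≤ m := mod_cast hnm
  have nine_le_log_pred : 9 ≤ log ((n : ℝ) - 1) :=
    nine_le_log_8192.trans (log_le_log (by norm_num) (by linarith))
  have log_pred_le : log ((n : ℝ) - 1) ≤ log n := log_le_log (by linarith) (by linarith)
  have loglog_le : log (log n) ≤ log (log (m + 1 / 2)) :=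
    log_le_log (by linarith) (log_le_log (by linarith) (by linarith))
  linarith [sum_range_primeCountIoc_le_add_primeDensityPrimitive hn hnm,
    primeDensityPrimitive_le_of_le (by linarith) log_pred_le,
    primeDensityPrimitive_le_of_le (by norm_num) nine_le_log_8192,
    six_log_two_sub_le_primeDensityPrimitive_nine,
    primeCountIoc_div_add_primeDensityPrimitive_le hnm (nine_le_log_pred.trans log_pred_le),
    log_two_gt_d9]

end PrimeSum

/-- The upper sum over primes: `∑_{x < p < 3x/2} 1/(p-x) ≤ C + 2 log log x`. -/
theorem upper_prime_sum_bound (x : ℝ)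
    (hx : ∃ m : ℕ, 0 < m ∧ x = m + 1 / 2) (hx' : 3.5 ≤ x) :
    (∑' p : ℕ, if p.Prime ∧ x < (p : ℝ) ∧ (p : ℝ) < 3 * x / 2 then
        1 / ((p : ℝ) - x) else 0)
    ≤ (1284699552 : ℝ) / 444215525 + 2 * Real.log (Real.log x) := by
  obtain ⟨m, -, rfl⟩ := hx
  have hm : 3 ≤ m := by
    have h : (3 : ℝ) ≤ m := by linarith
    exact_mod_cast h
  rw [tsum_primes_half_integer_eq]
  calc _ ≤ 2.892 + 2 * Real.log (Real.log (m + 1 / 2)) := by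
        rcases le_or_gt ((m + 1) / 2) 8192 with small | large
        · exact primeCountIoc_div_add_sum_le_of_le hm (by omega) (by omega) small
        · exact primeCountIoc_div_add_sum_le_of_ge large (by omega)
    _ ≤ _ := by
        gcongr
        norm_num
end

section
/- Let x ≥ 3.5 be a half-integer (x = m + 1/2 for some positive integer m). Then the sum over all pairs (p, k) with p prime and k ≥ 2 an integer such that x/2 < p^k < 3x/2 of 1/(k·|x − p^k|) is at most log(log x) + γ + 2·log 2 + log 2.4 + 7/156 + ((π² − 6)/(3·√(2x)))·((1/2)·log x − (3/2)·log 2 + γ + 3/7) + ((π² − 6)/(6·√x))·((1/2)·log x − 2·log 2 + γ + 3/7). -/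
/-!
Split the prime powers by the side of `x` on which they lie and by their exponent `k`, and on each
side single out the `k`-th power nearest to `x`. The distances from `x` to these nearest powers are
distinct half-integers, so the Cauchy–Schwarz inequality bounds their total contribution on one
side by `√(∑_{k ≥ 2} 1 / k ^ 2) * √(∑_{n ≥ 0} 1 / (n + 1/2) ^ 2) = √(π ^ 2 / 6 - 1) * √(π ^ 2 / 2)`,
which is less than `1.79`. For the other powers, Bernoulli's inequality gives
`|x - p ^ k| ≥ k * |p - P| * √a`, where `P ^ k` is the nearest power and `a` the lower end of the
range; since `|p - P| ≤ √b - √a`, their contribution is a harmonic sum of size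
`(π ^ 2 / 6 - 1) * (1 + log (√b - √a)) / √a`. The constant `2 * 1.79` is absorbed by `log (log x)`
and the explicit constants once `x ≥ 12`. For smaller `x` at most three of `4`, `8`, `16`, `9` lie
in the window, and every term is at most `2 / k`.
-/

section

open Finset Real

/-! ### Sums over half-integers and harmonic sums -/

theorem hasSum_one_div_nat_add_half_sq :
    HasSum (fun n : ℕ => 1 / ((n : ℝ) + 1 / 2) ^ 2) (π ^ 2 / 2) := by
  have even_term (n : ℕ) : 1 / ((2 * n : ℕ) : ℝ) ^ 2 = 1 / 4 * (1 / (n : ℝ) ^ 2) := by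
    push_cast
    ring
  have odd_term (n : ℕ) : 1 / ((2 * n + 1 : ℕ) : ℝ) ^ 2 = 1 / 4 * (1 / ((n : ℝ) + 1 / 2) ^ 2) := by
    push_cast
    field_simp
    norm_num
  have even : HasSum (fun n : ℕ => 1 / ((2 * n : ℕ) : ℝ) ^ 2) (1 / 4 * (π ^ 2 / 6)) := by
    simpa only [even_term] using hasSum_zeta_two.mul_left (1 / 4)
  have odd : Summable fun n : ℕ => 1 / ((n : ℝ) + 1 / 2) ^ 2 := by
    have odd_injective : Function.Injective fun n : ℕ => 2 * n + 1 := fun m n h => by lia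
    have := hasSum_zeta_two.summable.comp_injective odd_injective
    simp only [Function.comp_def, odd_term] at this
    exact (summable_mul_left_iff (by norm_num)).1 this
  have total : HasSum (fun n : ℕ => 1 / (n : ℝ) ^ 2)
      (1 / 4 * (π ^ 2 / 6) + 1 / 4 * ∑' n : ℕ, 1 / ((n : ℝ) + 1 / 2) ^ 2) :=
    HasSum.even_add_odd (f := fun n : ℕ => 1 / (n : ℝ) ^ 2) even
      (by simpa only [odd_term] using odd.hasSum.mul_left (1 / 4))
  have odd_tsum : ∑' n : ℕ, 1 / ((n : ℝ) + 1 / 2) ^ 2 = π ^ 2 / 2 := by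
    linarith [total.unique hasSum_zeta_two]
  exact odd_tsum ▸ odd.hasSum

theorem sum_one_div_sq_le_of_two_le {s : Finset ℕ} (hs : ∀ k ∈ s, 2 ≤ k) :
    ∑ k ∈ s, 1 / (k : ℝ) ^ 2 ≤ π ^ 2 / 6 - 1 := by
  have one_notMem : 1 ∉ s := fun h => absurd (hs 1 h) (by decide)
  have := sum_le_hasSum (insert 1 s) (fun k _ => by positivity) hasSum_zeta_two
  rw [sum_insert one_notMem, Nat.cast_one, one_pow, div_one] at this
  linarith

theorem sum_one_div_sq_le_of_half_integer {ι : Type*} {s : Finset ι} {d : ι → ℝ}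
    (hd : ∀ i ∈ s, ∃ n : ℕ, d i = n + 1 / 2) (hinj : Set.InjOn d s) :
    ∑ i ∈ s, 1 / d i ^ 2 ≤ π ^ 2 / 2 := by
  choose! n hn using hd
  have hinj' : Set.InjOn n s := fun i hi j hj h =>
    hinj hi hj <| by rw [hn i hi, hn j hj, h]
  calc ∑ i ∈ s, 1 / d i ^ 2 = ∑ i ∈ s, 1 / ((n i : ℝ) + 1 / 2) ^ 2 :=
        sum_congr rfl fun i hi => by rw [hn i hi]
    _ = ∑ j ∈ s.image n, 1 / ((j : ℝ) + 1 / 2) ^ 2 := by rw [sum_image hinj']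
    _ ≤ π ^ 2 / 2 :=
        sum_le_hasSum _ (fun j _ => by positivity) hasSum_one_div_nat_add_half_sq

theorem sqrt_mul_sqrt_pi_sq_le : √(π ^ 2 / 6 - 1) * √(π ^ 2 / 2) ≤ 1.79 := by
  have hπ : π ^ 2 ≤ 9.87 := by nlinarith [pi_lt_d4, pi_pos]
  rw [← sqrt_mul' _ (by positivity), sqrt_le_left (by norm_num)]
  nlinarith [sq_nonneg π]

theorem sum_one_div_mul_half_integer_le {s : Finset ℕ} {d : ℕ → ℝ} (hs : ∀ k ∈ s, 2 ≤ k)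
    (hd : ∀ k ∈ s, ∃ n : ℕ, d k = n + 1 / 2) (hinj : Set.InjOn d s) :
    ∑ k ∈ s, 1 / (k * d k) ≤ 1.79 :=
  calc ∑ k ∈ s, 1 / (k * d k) = ∑ k ∈ s, 1 / (k : ℝ) * (1 / d k) := by
        simp only [one_div_mul_one_div]
    _ ≤ √(∑ k ∈ s, (1 / (k : ℝ)) ^ 2) * √(∑ k ∈ s, (1 / d k) ^ 2) :=
        sum_mul_le_sqrt_mul_sqrt _ _ _
    _ ≤ √(π ^ 2 / 6 - 1) * √(π ^ 2 / 2) := by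
        simp only [one_div_pow]
        gcongr
        · exact sum_one_div_sq_le_of_two_le hs
        · exact sum_one_div_sq_le_of_half_integer hd hinj
    _ ≤ 1.79 := sqrt_mul_sqrt_pi_sq_le

theorem sum_one_div_le_harmonic {ι : Type*} {s : Finset ι} {e : ι → ℕ} {N : ℕ}
    (he : ∀ i ∈ s, e i ∈ Icc 1 N) (hinj : Set.InjOn e s) :
    ∑ i ∈ s, 1 / (e i : ℝ) ≤ harmonic N :=
  calc ∑ i ∈ s, 1 / (e i : ℝ) = ∑ j ∈ s.image e, 1 / (j : ℝ) := by rw [sum_image hinj]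
    _ ≤ ∑ j ∈ Icc 1 N, 1 / (j : ℝ) :=
        sum_le_sum_of_subset_of_nonneg (image_subset_iff.2 he) fun _ _ _ => by positivity
    _ = harmonic N := by simp [harmonic_eq_sum_Icc]

theorem harmonic_floor_le_max (y : ℝ) : (harmonic ⌊y⌋₊ : ℝ) ≤ max 0 (1 + log y) := by
  rcases lt_or_ge y 1 with hy | hy
  · simp [Nat.floor_eq_zero.2 hy]
  · exact (harmonic_floor_le_one_add_log y hy).trans (le_max_right _ _)

/-! ### Spacing of `k`-th powers -/

section Spacing

variable {a b u v x : ℝ} {k : ℕ}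

theorem sqrt_le_pow_pred (hk : 2 ≤ k) (hv : 1 ≤ v) (ha : a ≤ v ^ k) : √a ≤ v ^ (k - 1) := by
  rw [sqrt_le_left (by positivity), ← pow_mul]
  exact ha.trans (pow_le_pow_right₀ hv (by lia))

theorem abs_sub_mul_sqrt_le_abs_pow_sub_pow (hk : 2 ≤ k) (hu : 1 ≤ u) (hv : 1 ≤ v)
    (hua : a ≤ u ^ k) (hva : a ≤ v ^ k) : |u - v| * (k * √a) ≤ |u ^ k - v ^ k| := by
  wlog hvu : v ≤ u generalizing u v
  · rw [abs_sub_comm u, abs_sub_comm (u ^ k)]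
    exact this hv hu hva hua (le_of_not_ge hvu)
  have huv : 0 ≤ u - v := sub_nonneg.2 hvu
  have bernoulli : v ^ k + k * v ^ (k - 1) * (u - v) ≤ u ^ k := by
    simpa using pow_add_mul_le_add_pow (a := v) (b := u - v) (by linarith) (by linarith) k
  calc |u - v| * (k * √a) = k * √a * (u - v) := by rw [abs_of_nonneg huv, mul_comm]
    _ ≤ k * v ^ (k - 1) * (u - v) := by gcongr; exact sqrt_le_pow_pred hk hv hva
    _ ≤ u ^ k - v ^ k := by linarith
    _ ≤ |u ^ k - v ^ k| := le_abs_self _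

theorem pow_sub_pow_le_pow_sub_pow {j : ℕ} (hjk : j ≤ k) (hv : 1 ≤ v) (hvu : v ≤ u) :
    u ^ j - v ^ j ≤ u ^ k - v ^ k := by
  obtain ⟨i, rfl⟩ := Nat.exists_eq_add_of_le hjk
  have excess_mono : v ^ j * (v ^ i - 1) ≤ u ^ j * (u ^ i - 1) := by
    have : 0 ≤ u := by linarith
    have : 0 ≤ v ^ i - 1 := sub_nonneg.2 (one_le_pow₀ hv)
    gcongr
  rw [pow_add, pow_add]
  linarith

theorem sqrt_pow_eq_pow_sqrt (hu : 0 ≤ u) (k : ℕ) : √(u ^ k) = √u ^ k := by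
  rw [sqrt_eq_iff_eq_sq (by positivity) (by positivity), pow_right_comm, sq_sqrt hu]

theorem abs_sub_le_sqrt_sub_sqrt (hk : 2 ≤ k) (hu : 1 ≤ u) (hv : 1 ≤ v)
    (hub : u ^ k ∈ Set.Ioo a b) (hvb : v ^ k ∈ Set.Ioo a b) : |u - v| ≤ √b - √a := by
  wlog hvu : v ≤ u generalizing u v
  · rw [abs_sub_comm]
    exact this hv hu hvb hub (le_of_not_ge hvu)
  calc |u - v| = √u ^ 2 - √v ^ 2 := by
        rw [sq_sqrt (by linarith), sq_sqrt (by linarith), abs_of_nonneg (sub_nonneg.2 hvu)]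
    _ ≤ √u ^ k - √v ^ k :=
        pow_sub_pow_le_pow_sub_pow hk (one_le_sqrt.2 hv) (sqrt_le_sqrt hvu)
    _ = √(u ^ k) - √(v ^ k) := by
        rw [sqrt_pow_eq_pow_sqrt (by linarith), sqrt_pow_eq_pow_sqrt (by linarith)]
    _ ≤ √b - √a := sub_le_sub (sqrt_le_sqrt hub.2.le) (sqrt_le_sqrt hvb.1.le)

theorem abs_sub_le_of_nearer (hx : x ≤ a ∨ b ≤ x) (hu : u ∈ Set.Ioo a b)
    (hv : v ∈ Set.Ioo a b) (h : |x - v| ≤ |x - u|) : |u - v| ≤ |x - u| := by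
  obtain ⟨hau, hub⟩ := hu
  obtain ⟨hav, hvb⟩ := hv
  rcases hx with hxa | hbx
  · rw [abs_of_neg (by linarith), abs_of_neg (by linarith)] at h
    rw [abs_of_nonneg (by linarith), abs_of_neg (by linarith)]
    linarith
  · rw [abs_of_pos (by linarith), abs_of_pos (by linarith)] at h
    rw [abs_of_nonpos (by linarith), abs_of_pos (by linarith)]
    linarith

end Spacing

/-! ### One-sided sums over proper prime powers -/

/-- The pairs `(p, k)` with `p` prime and `k ≥ 2` whose proper prime power `p ^ k` lies strictly
between `a` and `b`. The box `range ⌈b⌉₊ ×ˢ range ⌈b⌉₊` only serves to make it a `Finset`. -/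
noncomputable def properPrimePowers (a b : ℝ) : Finset (ℕ × ℕ) :=
  open scoped Classical in
  {q ∈ range ⌈b⌉₊ ×ˢ range ⌈b⌉₊ | q.1.Prime ∧ 2 ≤ q.2 ∧ (q.1 : ℝ) ^ q.2 ∈ Set.Ioo a b}

/-- The sum of `1 / (k |x - p ^ k|)` over the proper prime powers `p ^ k` strictly between
`a` and `b`. -/
noncomputable def properPrimePowerSum (x a b : ℝ) : ℝ :=
  ∑ q ∈ properPrimePowers a b, 1 / (q.2 * |x - (q.1 : ℝ) ^ q.2|)

theorem mem_properPrimePowers {a b : ℝ} {q : ℕ × ℕ} :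
    q ∈ properPrimePowers a b ↔ q.1.Prime ∧ 2 ≤ q.2 ∧ (q.1 : ℝ) ^ q.2 ∈ Set.Ioo a b := by
  simp only [properPrimePowers, mem_filter, mem_product, mem_range, and_iff_right_iff_imp]
  rintro ⟨hp, hk, -, hb⟩
  have hb' : q.1 ^ q.2 < ⌈b⌉₊ := Nat.lt_ceil.2 (by exact_mod_cast hb)
  exact ⟨(Nat.le_self_pow (by lia) _).trans_lt hb', (Nat.lt_pow_self hp.one_lt).trans hb'⟩

theorem exists_abs_half_integer_sub_natCast_eq {x : ℝ} (hx : ∃ m : ℕ, x = m + 1 / 2) (n : ℕ) :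
    ∃ j : ℕ, |x - n| = j + 1 / 2 := by
  obtain ⟨m, rfl⟩ := hx
  rcases le_or_gt n m with h | h
  · have : (n : ℝ) ≤ m := by exact_mod_cast h
    exact ⟨m - n, by rw [abs_of_pos (by linarith), Nat.cast_sub h]; ring⟩
  · have : (m + 1 : ℝ) ≤ n := by exact_mod_cast h
    exact ⟨n - (m + 1), by rw [abs_of_neg (by linarith), Nat.cast_sub h]; push_cast; ring⟩

section OneSided

variable {a b x : ℝ} {k : ℕ} {s : Finset ℕ}

-- All the other bases lie on the same side of a base `P` whose power is nearest to `x`.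
theorem injOn_natAbs_sub_nearest (hk : k ≠ 0) (hx : x ≤ a ∨ b ≤ x)
    (hs : ∀ p ∈ s, (p : ℝ) ^ k ∈ Set.Ioo a b) {P : ℕ} (hP : P ∈ s)
    (nearest : ∀ p ∈ s, |x - (P : ℝ) ^ k| ≤ |x - (p : ℝ) ^ k|) :
    Set.InjOn (fun p : ℕ => ((p : ℤ) - P).natAbs) s := by
  have pow_le_iff (p q : ℕ) : (p : ℝ) ^ k ≤ (q : ℝ) ^ k ↔ p ≤ q := by
    exact_mod_cast Nat.pow_le_pow_iff_left hk
  have same_side : (∀ p ∈ s, P ≤ p) ∨ ∀ p ∈ s, p ≤ P := by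
    refine hx.imp (fun hxa p hp => ?_) (fun hbx p hp => ?_)
    · have := nearest p hp
      rw [abs_of_neg (by linarith [(hs P hP).1]), abs_of_neg (by linarith [(hs p hp).1])] at this
      exact (pow_le_iff P p).1 (by linarith)
    · have := nearest p hp
      rw [abs_of_pos (by linarith [(hs P hP).2]), abs_of_pos (by linarith [(hs p hp).2])] at this
      exact (pow_le_iff p P).1 (by linarith)
  intro p hp q hq (h : ((p : ℤ) - P).natAbs = ((q : ℤ) - P).natAbs)
  rcases same_side with side | side
  · have := side p hp
    have := side q hq
    lia
  · have := side p hp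
    have := side q hq
    lia

theorem one_le_of_pow_mem_Ioo (hk : k ≠ 0) (ha : 0 < a) {p : ℕ}
    (hp : (p : ℝ) ^ k ∈ Set.Ioo a b) : (1 : ℝ) ≤ p := by
  have : p ≠ 0 := by
    rintro rfl
    have := hp.1
    rw [Nat.cast_zero, zero_pow hk] at this
    exact this.not_gt ha
  exact_mod_cast Nat.one_le_iff_ne_zero.2 this

theorem cast_natAbs_natCast_sub (p P : ℕ) : (((p : ℤ) - P).natAbs : ℝ) = |(p : ℝ) - P| := by
  rw [Nat.cast_natAbs]
  norm_cast

theorem one_div_mul_abs_sub_pow_le (hk : 2 ≤ k) (ha : 0 < a) (hx : x ≤ a ∨ b ≤ x) {p P : ℕ}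
    (hp : (p : ℝ) ^ k ∈ Set.Ioo a b) (hP : (P : ℝ) ^ k ∈ Set.Ioo a b) (hpP : p ≠ P)
    (nearer : |x - (P : ℝ) ^ k| ≤ |x - (p : ℝ) ^ k|) :
    1 / (k * |x - (p : ℝ) ^ k|) ≤ 1 / ((k : ℝ) ^ 2 * √a) * (1 / (((p : ℤ) - P).natAbs : ℝ)) := by
  have index_pos : 0 < ((p : ℤ) - P).natAbs := by lia
  have spacing : |(p : ℝ) - P| * (k * √a) ≤ |x - (p : ℝ) ^ k| :=
    (abs_sub_mul_sqrt_le_abs_pow_sub_pow hk (one_le_of_pow_mem_Ioo (by lia) ha hp)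
      (one_le_of_pow_mem_Ioo (by lia) ha hP) hp.1.le hP.1.le).trans
      (abs_sub_le_of_nearer hx hp hP nearer)
  rw [one_div_mul_one_div]
  refine one_div_le_one_div_of_le (by positivity) ?_
  calc (k : ℝ) ^ 2 * √a * ((p : ℤ) - P).natAbs = k * (|(p : ℝ) - P| * (k * √a)) := by
        rw [cast_natAbs_natCast_sub]
        ring
    _ ≤ k * |x - (p : ℝ) ^ k| := by gcongr

theorem sum_erase_nearest_le (hk : 2 ≤ k) (ha : 0 < a) (hx : x ≤ a ∨ b ≤ x)
    (hs : ∀ p ∈ s, (p : ℝ) ^ k ∈ Set.Ioo a b) {P : ℕ} (hP : P ∈ s)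
    (nearest : ∀ p ∈ s, |x - (P : ℝ) ^ k| ≤ |x - (p : ℝ) ^ k|) :
    ∑ p ∈ s.erase P, 1 / (k * |x - (p : ℝ) ^ k|) ≤
      1 / (k : ℝ) ^ 2 * (max 0 (1 + log (√b - √a)) / √a) := by
  have one_le (p : ℕ) (hp : p ∈ s) : (1 : ℝ) ≤ p := one_le_of_pow_mem_Ioo (by lia) ha (hs p hp)
  have index_mem (p : ℕ) (hp : p ∈ s.erase P) :
      ((p : ℤ) - P).natAbs ∈ Icc 1 ⌊√b - √a⌋₊ := by
    obtain ⟨hpP, hps⟩ := mem_erase.1 hp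
    refine mem_Icc.2 ⟨by lia, Nat.le_floor ?_⟩
    rw [cast_natAbs_natCast_sub]
    exact abs_sub_le_sqrt_sub_sqrt hk (one_le p hps) (one_le P hP) (hs p hps) (hs P hP)
  have index_injOn : Set.InjOn (fun p : ℕ => ((p : ℤ) - P).natAbs) (s.erase P) :=
    (injOn_natAbs_sub_nearest (by lia) hx hs hP nearest).mono (coe_subset.2 (erase_subset P s))
  calc ∑ p ∈ s.erase P, 1 / (k * |x - (p : ℝ) ^ k|)
      ≤ ∑ p ∈ s.erase P, 1 / ((k : ℝ) ^ 2 * √a) * (1 / (((p : ℤ) - P).natAbs : ℝ)) := by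
        refine sum_le_sum fun p hp => ?_
        obtain ⟨hpP, hps⟩ := mem_erase.1 hp
        exact one_div_mul_abs_sub_pow_le hk ha hx (hs p hps) (hs P hP) hpP (nearest p hps)
    _ = 1 / ((k : ℝ) ^ 2 * √a) * ∑ p ∈ s.erase P, 1 / (((p : ℤ) - P).natAbs : ℝ) :=
        (mul_sum _ _ _).symm
    _ ≤ 1 / ((k : ℝ) ^ 2 * √a) * max 0 (1 + log (√b - √a)) := by
        gcongr
        exact (sum_one_div_le_harmonic index_mem index_injOn).trans (harmonic_floor_le_max _)
    _ = 1 / (k : ℝ) ^ 2 * (max 0 (1 + log (√b - √a)) / √a) := by field_simp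

theorem exists_sum_le_nearest_add (hk : 2 ≤ k) (ha : 0 < a) (hx : x ≤ a ∨ b ≤ x)
    (hs : ∀ p ∈ s, (p : ℝ) ^ k ∈ Set.Ioo a b) (hne : s.Nonempty) :
    ∃ P ∈ s, ∑ p ∈ s, 1 / (k * |x - (p : ℝ) ^ k|) ≤
      1 / (k * |x - (P : ℝ) ^ k|) +
        1 / (k : ℝ) ^ 2 * (max 0 (1 + log (√b - √a)) / √a) := by
  obtain ⟨P, hP, nearest⟩ := s.exists_min_image (fun p : ℕ => |x - (p : ℝ) ^ k|) hne
  refine ⟨P, hP, ?_⟩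
  rw [← add_sum_erase s _ hP]
  gcongr
  exact sum_erase_nearest_le hk ha hx hs hP nearest

theorem injOn_abs_sub_of_one_sided (hx : x ≤ a ∨ b ≤ x) :
    Set.InjOn (fun y => |x - y|) (Set.Ioo a b) := by
  rintro y ⟨hay, hyb⟩ z ⟨haz, hzb⟩ (h : |x - y| = |x - z|)
  rcases hx with hxa | hbx
  · rw [abs_of_neg (by linarith), abs_of_neg (by linarith)] at h
    linarith
  · rw [abs_of_pos (by linarith), abs_of_pos (by linarith)] at h
    linarith

theorem injOn_abs_sub_properPrimePowers (hx : x ≤ a ∨ b ≤ x) :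
    Set.InjOn (fun q : ℕ × ℕ => |x - (q.1 : ℝ) ^ q.2|) (properPrimePowers a b) := by
  intro q hq r hr h
  obtain ⟨hq_prime, hq_two, hq_mem⟩ := mem_properPrimePowers.1 hq
  obtain ⟨hr_prime, hr_two, hr_mem⟩ := mem_properPrimePowers.1 hr
  have pow_eq : q.1 ^ q.2 = r.1 ^ r.2 := by
    exact_mod_cast injOn_abs_sub_of_one_sided hx hq_mem hr_mem h
  obtain ⟨hbase, hexp⟩ := hq_prime.pow_inj' hr_prime (by lia) (by lia) pow_eq
  exact Prod.ext hbase hexp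

theorem exists_properPrimePowerSum_le_sum_nearest (ha : 0 < a) (hx : x ≤ a ∨ b ≤ x) :
    ∃ P : ℕ → ℕ,
      (∀ k ∈ (properPrimePowers a b).image Prod.snd, (P k, k) ∈ properPrimePowers a b) ∧
      properPrimePowerSum x a b ≤ ∑ k ∈ (properPrimePowers a b).image Prod.snd,
        (1 / (k * |x - (P k : ℝ) ^ k|) +
          1 / (k : ℝ) ^ 2 * (max 0 (1 + log (√b - √a)) / √a)) := by
  set bases : ℕ → Finset ℕ := fun k => {q ∈ properPrimePowers a b | q.2 = k}.image Prod.fst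
  have mem_bases {p k : ℕ} : p ∈ bases k ↔ (p, k) ∈ properPrimePowers a b := by simp [bases]
  have exists_nearest : ∀ k ∈ (properPrimePowers a b).image Prod.snd, ∃ P ∈ bases k,
      ∑ p ∈ bases k, 1 / (k * |x - (p : ℝ) ^ k|) ≤ 1 / (k * |x - (P : ℝ) ^ k|) +
        1 / (k : ℝ) ^ 2 * (max 0 (1 + log (√b - √a)) / √a) := by
    refine forall_mem_image.2 fun q hq => ?_
    exact exists_sum_le_nearest_add (mem_properPrimePowers.1 hq).2.1 ha hx
      (fun p hp => (mem_properPrimePowers.1 (mem_bases.1 hp)).2.2) ⟨q.1, mem_bases.2 hq⟩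
  choose! P hP fiber_le using exists_nearest
  refine ⟨P, fun k hk => mem_bases.1 (hP k hk), ?_⟩
  calc properPrimePowerSum x a b
      = ∑ k ∈ (properPrimePowers a b).image Prod.snd,
          ∑ p ∈ bases k, 1 / (k * |x - (p : ℝ) ^ k|) :=
        sum_finset_product_right _ _ _ fun q =>
          ⟨fun hq => ⟨mem_image_of_mem _ hq, mem_bases.2 hq⟩, fun hq => mem_bases.1 hq.2⟩
    _ ≤ _ := sum_le_sum fiber_le

theorem properPrimePowerSum_le (hx : ∃ m : ℕ, x = m + 1 / 2) (ha : 0 < a)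
    (hxab : x ≤ a ∨ b ≤ x) :
    properPrimePowerSum x a b ≤
      1.79 + (π ^ 2 / 6 - 1) * (max 0 (1 + log (√b - √a)) / √a) := by
  obtain ⟨P, hP, sum_le⟩ := exists_properPrimePowerSum_le_sum_nearest ha hxab
  refine sum_le.trans ?_
  rw [sum_add_distrib, ← sum_mul]
  have two_le : ∀ k ∈ (properPrimePowers a b).image Prod.snd, 2 ≤ k := fun k hk =>
    (mem_properPrimePowers.1 (hP k hk)).2.1
  have half_integer (k : ℕ) : ∃ n : ℕ, |x - (P k : ℝ) ^ k| = n + 1 / 2 := by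
    exact_mod_cast exists_abs_half_integer_sub_natCast_eq hx (P k ^ k)
  have injOn : Set.InjOn (fun k => |x - (P k : ℝ) ^ k|)
      ((properPrimePowers a b).image Prod.snd) := fun k hk l hl h =>
    congrArg Prod.snd (injOn_abs_sub_properPrimePowers hxab (hP k hk) (hP l hl) h)
  gcongr
  · exact sum_one_div_mul_half_integer_le two_le (fun k _ => half_integer k) injOn
  · exact sum_one_div_sq_le_of_two_le two_le

end OneSided

/-! ### The window `x / 2 < p ^ k < 3 x / 2` -/

theorem tsum_eq_properPrimePowerSum (x a b : ℝ) :
    (∑' q : ℕ × ℕ,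
        if q.1.Prime ∧ 2 ≤ q.2 ∧ a < (q.1 : ℝ) ^ q.2 ∧ (q.1 : ℝ) ^ q.2 < b then
          1 / (q.2 * |x - (q.1 : ℝ) ^ q.2|)
        else 0) = properPrimePowerSum x a b := by
  rw [tsum_eq_sum (s := properPrimePowers a b)]
  · exact sum_congr rfl fun q hq => if_pos (mem_properPrimePowers.1 hq)
  · exact fun q hq => if_neg fun h => hq (mem_properPrimePowers.2 h)

theorem properPrimePowerSum_eq_add {x a b : ℝ} (hx : ∃ m : ℕ, x = m + 1 / 2) (hax : a ≤ x)
    (hxb : x ≤ b) :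
    properPrimePowerSum x a b = properPrimePowerSum x a x + properPrimePowerSum x x b := by
  have ne_pow (q : ℕ × ℕ) : (q.1 : ℝ) ^ q.2 ≠ x := by
    obtain ⟨j, hj⟩ := exists_abs_half_integer_sub_natCast_eq hx (q.1 ^ q.2)
    rintro rfl
    push_cast at hj
    rw [sub_self, abs_zero] at hj
    linarith [j.cast_nonneg (α := ℝ)]
  have below : {q ∈ properPrimePowers a b | (q.1 : ℝ) ^ q.2 < x} = properPrimePowers a x := by
    ext q
    simp only [mem_filter, mem_properPrimePowers, Set.mem_Ioo]
    grind
  have above : {q ∈ properPrimePowers a b | ¬(q.1 : ℝ) ^ q.2 < x} = properPrimePowers x b := by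
    ext q
    have := ne_pow q
    simp only [mem_filter, mem_properPrimePowers, Set.mem_Ioo]
    grind
  rw [properPrimePowerSum, ← sum_filter_add_sum_filter_not _ fun q => (q.1 : ℝ) ^ q.2 < x,
    below, above, properPrimePowerSum, properPrimePowerSum]

theorem mem_of_prime_of_pow_lt_eighteen {q : ℕ × ℕ} (hq : q.1.Prime) (hk : 2 ≤ q.2)
    (hlt : q.1 ^ q.2 < 18) : q ∈ ({(2, 2), (2, 3), (2, 4), (3, 2)} : Finset (ℕ × ℕ)) := by
  obtain ⟨p, k⟩ := q
  have hp5 : p < 5 :=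
    lt_of_pow_lt_pow_left₀ 2 (by simp) (by linarith [Nat.pow_le_pow_right hq.pos hk])
  have hk5 : k < 5 := (Nat.pow_lt_pow_iff_right (a := 2) (by simp)).1
    (by linarith [Nat.pow_le_pow_left hq.two_le k])
  interval_cases p <;> interval_cases k <;> revert hq hlt <;> decide

theorem properPrimePowerSum_le_sum_two_div {x a b : ℝ} (hx : ∃ m : ℕ, x = m + 1 / 2)
    {t : Finset (ℕ × ℕ)} (ht : properPrimePowers a b ⊆ t) :
    properPrimePowerSum x a b ≤ ∑ q ∈ t, 2 / (q.2 : ℝ) :=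
  calc properPrimePowerSum x a b ≤ ∑ q ∈ properPrimePowers a b, 2 / (q.2 : ℝ) := by
        refine sum_le_sum fun q hq => ?_
        obtain ⟨j, hj⟩ := exists_abs_half_integer_sub_natCast_eq hx (q.1 ^ q.2)
        push_cast at hj
        have : (0 : ℝ) < q.2 := by
          exact_mod_cast two_pos.trans_le (mem_properPrimePowers.1 hq).2.1
        rw [hj, div_le_div_iff₀ (by positivity) this]
        nlinarith [j.cast_nonneg (α := ℝ)]
    _ ≤ ∑ q ∈ t, 2 / (q.2 : ℝ) := sum_le_sum_of_subset_of_nonneg ht fun _ _ _ => by positivity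

theorem properPrimePowerSum_window_le_of_le_twelve {x : ℝ} (hx : ∃ m : ℕ, x = m + 1 / 2)
    (hx12 : x ≤ 12) : properPrimePowerSum x (x / 2) (3 * x / 2) ≤ 8 / 3 := by
  have mem_four (q : ℕ × ℕ) (hq : q ∈ properPrimePowers (x / 2) (3 * x / 2)) :
      q ∈ ({(2, 2), (2, 3), (2, 4), (3, 2)} : Finset (ℕ × ℕ)) := by
    obtain ⟨hp, hk, -, hlt⟩ := mem_properPrimePowers.1 hq
    refine mem_of_prime_of_pow_lt_eighteen hp hk ?_
    have : (q.1 : ℝ) ^ q.2 < 18 := by linarith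
    exact_mod_cast this
  rcases lt_or_ge x 8 with hx8 | hx8
  · have window_subset : properPrimePowers (x / 2) (3 * x / 2) ⊆ {(2, 2), (2, 3), (3, 2)} := by
      intro q hq
      have : q ≠ (2, 4) := by
        rintro rfl
        have := (mem_properPrimePowers.1 hq).2.2.2
        norm_num at this
        linarith
      grind
    refine (properPrimePowerSum_le_sum_two_div hx window_subset).trans ?_
    norm_num
  · have window_subset : properPrimePowers (x / 2) (3 * x / 2) ⊆ {(2, 3), (2, 4), (3, 2)} := by
      intro q hq
      have : q ≠ (2, 2) := by
        rintro rfl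
        have := (mem_properPrimePowers.1 hq).2.2.1
        norm_num at this
        linarith
      grind
    refine (properPrimePowerSum_le_sum_two_div hx window_subset).trans ?_
    norm_num

/-! ### Comparison with the explicit bound -/

/-- The factor `½ log w + γ + 3/7` of the far terms: `w = x / 8` gives the one below `x`, and
`w = x / 16` the one above `x`. -/
noncomputable def farFactor (w : ℝ) : ℝ := 1 / 2 * log w + eulerMascheroniConstant + 3 / 7

theorem farFactor_div_eight {x : ℝ} (hx : 0 < x) :
    farFactor (x / 8) = 1 / 2 * log x - 3 / 2 * log 2 + eulerMascheroniConstant + 3 / 7 := by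
  rw [farFactor, show (8 : ℝ) = 2 ^ 3 by norm_num, log_div hx.ne' (by norm_num), log_pow]
  push_cast
  ring

theorem farFactor_div_sixteen {x : ℝ} (hx : 0 < x) :
    farFactor (x / 16) = 1 / 2 * log x - 2 * log 2 + eulerMascheroniConstant + 3 / 7 := by
  rw [farFactor, show (16 : ℝ) = 2 ^ 4 by norm_num, log_div hx.ne' (by norm_num), log_pow]
  push_cast
  ring

theorem farFactor_nonneg {w : ℝ} (hw : 1 / 5 ≤ w) : 0 ≤ farFactor w := by
  have log_five : log 5 = 2 * log 2 + log (5 / 4) := by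
    rw [show (5 : ℝ) = 2 ^ 2 * (5 / 4) by norm_num, log_mul (by norm_num) (by norm_num), log_pow]
    norm_num
  have log_le : log (1 / 5) ≤ log w := log_le_log (by norm_num) hw
  rw [one_div, log_inv] at log_le
  rw [farFactor]
  linarith [one_half_lt_eulerMascheroniConstant, log_two_lt_d9,
    log_le_sub_one_of_pos (show (0 : ℝ) < 5 / 4 by norm_num)]

-- `13 / 14 = 1 / 2 + 3 / 7` is what `1 / 2 < γ` leaves after `log t ≤ t - 1`.
theorem max_zero_one_add_log_le_farFactor {y w : ℝ} (hy : 0 < y) (hw : 1 / 5 ≤ w)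
    (hyw : y ≤ 13 / 14 * √w) : max 0 (1 + log y) ≤ farFactor w := by
  refine max_le (farFactor_nonneg hw) ?_
  have hw0 : 0 < w := by linarith
  have log_y_le : log y ≤ log (13 / 14) + 1 / 2 * log w :=
    calc log y ≤ log (13 / 14 * √w) := log_le_log hy hyw
      _ = log (13 / 14) + 1 / 2 * log w := by
        rw [log_mul (by norm_num) (by positivity), log_sqrt hw0.le]
        ring
  rw [farFactor]
  linarith [one_half_lt_eulerMascheroniConstant,
    log_le_sub_one_of_pos (show (0 : ℝ) < 13 / 14 by norm_num)]

section LargeWindow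

variable {x : ℝ}

theorem properPrimePowerSum_below_le (hx : ∃ m : ℕ, x = m + 1 / 2) (hx4 : 4 ≤ x) :
    properPrimePowerSum x (x / 2) x ≤
      1.79 + (π ^ 2 - 6) / (3 * √(2 * x)) * farFactor (x / 8) := by
  have sqrt_half : √(x / 2) = 2 * √(x / 8) := by
    rw [show x / 2 = 2 ^ 2 * (x / 8) by ring, sqrt_mul (by norm_num), sqrt_sq (by norm_num)]
  have sqrt_two_mul : √(2 * x) = 2 * √(x / 2) := by
    rw [show 2 * x = 2 ^ 2 * (x / 2) by ring, sqrt_mul (by norm_num), sqrt_sq (by norm_num)]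
  have sqrt_le : √x ≤ (2 + 13 / 14) * √(x / 8) := by
    rw [sqrt_le_left (by positivity), mul_pow, sq_sqrt (by linarith)]
    linarith
  have log_le : max 0 (1 + log (√x - √(x / 2))) ≤ farFactor (x / 8) :=
    max_zero_one_add_log_le_farFactor
      (sub_pos.2 (sqrt_lt_sqrt (by linarith) (by linarith))) (by linarith) (by linarith)
  have hπ : 0 ≤ π ^ 2 / 6 - 1 := by nlinarith [pi_gt_three]
  calc properPrimePowerSum x (x / 2) x
      ≤ 1.79 + (π ^ 2 / 6 - 1) * (max 0 (1 + log (√x - √(x / 2))) / √(x / 2)) :=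
        properPrimePowerSum_le hx (by linarith) (Or.inr le_rfl)
    _ ≤ 1.79 + (π ^ 2 / 6 - 1) * (farFactor (x / 8) / √(x / 2)) := by gcongr
    _ = 1.79 + (π ^ 2 - 6) / (3 * √(2 * x)) * farFactor (x / 8) := by
        rw [sqrt_two_mul]
        field

theorem properPrimePowerSum_above_le (hx : ∃ m : ℕ, x = m + 1 / 2) (hx4 : 4 ≤ x) :
    properPrimePowerSum x x (3 * x / 2) ≤
      1.79 + (π ^ 2 - 6) / (6 * √x) * farFactor (x / 16) := by
  have sqrt_eq : √x = 4 * √(x / 16) := by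
    rw [show x = 4 ^ 2 * (x / 16) by ring, sqrt_mul (by norm_num), sqrt_sq (by norm_num)]
    ring_nf
  have sqrt_le : √(3 * x / 2) ≤ (4 + 13 / 14) * √(x / 16) := by
    rw [sqrt_le_left (by positivity), mul_pow, sq_sqrt (by linarith)]
    linarith
  have log_le : max 0 (1 + log (√(3 * x / 2) - √x)) ≤ farFactor (x / 16) :=
    max_zero_one_add_log_le_farFactor
      (sub_pos.2 (sqrt_lt_sqrt (by linarith) (by linarith))) (by linarith) (by linarith)
  have hπ : 0 ≤ π ^ 2 / 6 - 1 := by nlinarith [pi_gt_three]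
  calc properPrimePowerSum x x (3 * x / 2)
      ≤ 1.79 + (π ^ 2 / 6 - 1) * (max 0 (1 + log (√(3 * x / 2) - √x)) / √x) :=
        properPrimePowerSum_le hx (by linarith) (Or.inl le_rfl)
    _ ≤ 1.79 + (π ^ 2 / 6 - 1) * (farFactor (x / 16) / √x) := by gcongr
    _ = 1.79 + (π ^ 2 - 6) / (6 * √x) * farFactor (x / 16) := by field

end LargeWindow

theorem log_twelve_fifths_gt : 0.85 < log 2.4 := by
  have : log 2.4 = log 2 + log 1.2 := by
    rw [← log_mul (by norm_num) (by norm_num)]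
    norm_num
  norm_num at this ⊢
  linarith [log_two_gt_d9, one_sub_inv_le_log_of_pos (show (0 : ℝ) < 6 / 5 by norm_num)]

theorem near_constant_gt :
    2.78 < eulerMascheroniConstant + 2 * log 2 + log 2.4 + 7 / 156 := by
  linarith [one_half_lt_eulerMascheroniConstant, log_two_gt_d9, log_twelve_fifths_gt]

theorem log_log_nonneg {x : ℝ} (hx : 3.5 ≤ x) : 0 ≤ log (log x) := by
  refine log_nonneg ((le_log_iff_exp_le (by linarith)).2 ?_)
  linarith [exp_one_lt_d9]

theorem log_log_gt_of_twelve_le {x : ℝ} (hx : 12 ≤ x) : 0.85 < log (log x) := by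
  have log_twelve : log 12 = 3 * log 2 + log 1.5 := by
    rw [show (12 : ℝ) = 2 ^ 3 * 1.5 by norm_num, log_mul (by norm_num) (by norm_num), log_pow]
    norm_num
  have log_three_halves : 1 - 1.5⁻¹ ≤ log 1.5 := one_sub_inv_le_log_of_pos (by norm_num)
  have le_log_x : 2.4 ≤ log x := by
    refine le_trans ?_ (log_le_log (by norm_num) hx)
    norm_num at log_twelve log_three_halves ⊢
    linarith [log_two_gt_d9]
  exact log_twelve_fifths_gt.trans_le (log_le_log (by norm_num) le_log_x)

theorem properPrimePowerSum_window_le {x : ℝ} (hx : ∃ m : ℕ, x = m + 1 / 2) (hx' : 3.5 ≤ x) :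
    properPrimePowerSum x (x / 2) (3 * x / 2) ≤
      log (log x) + eulerMascheroniConstant + 2 * log 2 + log 2.4 + 7 / 156
        + (π ^ 2 - 6) / (3 * √(2 * x)) * farFactor (x / 8)
        + (π ^ 2 - 6) / (6 * √x) * farFactor (x / 16) := by
  rcases le_total x 12 with hx12 | hx12
  · have hπ : 0 ≤ π ^ 2 - 6 := by nlinarith [pi_gt_three]
    have below_nonneg : 0 ≤ (π ^ 2 - 6) / (3 * √(2 * x)) * farFactor (x / 8) :=
      mul_nonneg (by positivity) (farFactor_nonneg (by linarith))
    have above_nonneg : 0 ≤ (π ^ 2 - 6) / (6 * √x) * farFactor (x / 16) :=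
      mul_nonneg (by positivity) (farFactor_nonneg (by linarith))
    linarith [properPrimePowerSum_window_le_of_le_twelve hx hx12, near_constant_gt,
      log_log_nonneg hx']
  · rw [properPrimePowerSum_eq_add hx (by linarith) (by linarith)]
    linarith [properPrimePowerSum_below_le hx (by linarith),
      properPrimePowerSum_above_le hx (by linarith), near_constant_gt,
      log_log_gt_of_twelve_le hx12]

end

/-- The prime-power estimate of Section 3.4: the sum of `1/(k |x - p^k|)` over
prime powers `p^k` with `k ≥ 2` and `x/2 < p^k < 3x/2` is at most
`S_near + S_far⁻ + S_far⁺` bounds combined. -/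
theorem prime_power_sum_bound (x : ℝ)
    (hx : ∃ m : ℕ, 0 < m ∧ x = m + 1 / 2) (hx' : 3.5 ≤ x) :
    (∑' pk : ℕ × ℕ,
        if pk.1.Prime ∧ 2 ≤ pk.2 ∧ x / 2 < (pk.1 : ℝ) ^ pk.2 ∧
            (pk.1 : ℝ) ^ pk.2 < 3 * x / 2 then
          1 / (pk.2 * |x - (pk.1 : ℝ) ^ pk.2|)
        else 0)
    ≤ Real.log (Real.log x) + Real.eulerMascheroniConstant + 2 * Real.log 2
        + Real.log 2.4 + 7 / 156
      + (Real.pi ^ 2 - 6) / (3 * Real.sqrt (2 * x)) *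
          (1 / 2 * Real.log x - 3 / 2 * Real.log 2
            + Real.eulerMascheroniConstant + 3 / 7)
      + (Real.pi ^ 2 - 6) / (6 * Real.sqrt x) *
          (1 / 2 * Real.log x - 2 * Real.log 2
            + Real.eulerMascheroniConstant + 3 / 7) := by
  obtain ⟨m, -, hm⟩ := hx
  have hx0 : 0 < x := by linarith
  rw [tsum_eq_properPrimePowerSum, ← farFactor_div_eight hx0, ← farFactor_div_sixteen hx0]
  exact properPrimePowerSum_window_le ⟨m, hm⟩ hx'
end
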